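/- arXiv:2310.14582 — 3 statements merged into one kernel-verified Lean document; each statement's English description precedes it below -/
import Mathlib

section
/- Let a₁, a₂ ∈ A be such that the unital subalgebras of A generated by a₁ and by a₂ are free with respect to φ. Then φ′((p a₁ a₂ p)ⁿ) = φ′((p a₁ p a₂ p)ⁿ) for every n ≥ 1. Consequently, the infinitesimal distributions of p a₁ a₂ p and of p a₁ p a₂ p with respect to (φ, φ + φ′) coincide; this expresses the free multiplicative convolution identity (μ₁, μ₁ − τ₁) ⊠ (μ₂, μ₂ − τ₂) = (μ, μ − τ), where μ = μ₁ ⊠ μ₂ and τ, τᵢ are the inverse Markov–Krein transforms of μ, μᵢ. -/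
open scoped BigOperators

namespace TypeBPrime

variable {B : Type*} [Ring B] [Algebra ℂ B]

/-- The alternating word `a 0 * (f 0 * a 1) * ⋯ * (f (n-1) * a n)`. -/
def altWord {n : ℕ} (a : Fin (n + 1) → B) (f : Fin n → B) : B :=
  a 0 * (List.ofFn fun k : Fin n => f k * a k.succ).prod

/-- Cyclic-antimonotone independence of the pair `(A₁, F₁)` with respect to `(φ, Φ)`:
`Φ(a₀ f₁ a₁ ⋯ fₙ aₙ) = φ(a₀ aₙ) · φ(a₁) ⋯ φ(a_{n-1}) · Φ(f₁ ⋯ fₙ)` for all `n ≥ 1`. -/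
def CyclicAntimonotone (φ Φ : B → ℂ) (A₁ F₁ : Set B) : Prop :=
  ∀ n : ℕ, 0 < n → ∀ (a : Fin (n + 1) → B) (f : Fin n → B),
    (∀ k, a k ∈ A₁) → (∀ k, f k ∈ F₁) →
    Φ (altWord a f) =
      φ (a 0 * a (Fin.last n)) *
        (∏ k ∈ Finset.Ioo (0 : Fin (n + 1)) (Fin.last n), φ (a k)) *
        Φ (List.ofFn f).prod

/-- Freeness of a family of subsets with respect to `φ`:
alternating words in centered elements are centered. -/
def IsFreeFamily {ι : Type*} (φ : B → ℂ) (Alg : ι → Set B) : Prop :=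
  ∀ (n : ℕ) (idx : Fin (n + 1) → ι) (a : Fin (n + 1) → B),
    (∀ k : Fin n, idx k.castSucc ≠ idx k.succ) →
    (∀ k, a k ∈ Alg (idx k)) → (∀ k, φ (a k) = 0) →
    φ (List.ofFn a).prod = 0

/-- Infinitesimal freeness of a family of subsets with respect to `(φ, φ')`. -/
def IsInfFree {ι : Type*} (φ φ' : B → ℂ) (Alg : ι → Set B) : Prop :=
  IsFreeFamily φ Alg ∧
  (∀ (n : ℕ) (idx : Fin (n + 1) → ι) (b : Fin (n + 1) → B),
    (∀ k : Fin n, idx k.castSucc ≠ idx k.succ) →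
    (∀ k, b k ∈ Alg (idx k)) → (∀ k, φ (b k) = 0) →
    ¬(Even n ∧ ∀ k, idx k = idx k.rev) →
    φ' (List.ofFn b).prod = 0) ∧
  (∀ (m : ℕ) (idx : Fin (2 * m + 1) → ι) (b : Fin (2 * m + 1) → B),
    (∀ k : Fin (2 * m), idx k.castSucc ≠ idx k.succ) →
    (∀ k, b k ∈ Alg (idx k)) → (∀ k, φ (b k) = 0) →
    (∀ k, idx k = idx k.rev) →
    φ' (List.ofFn b).prod =
      (∏ j : Fin m,
          φ (b (Fin.castLE (by omega) j) * b (Fin.castLE (by omega) j).rev)) *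
        φ' (b ⟨m, by omega⟩))

/-- Trivial independence with respect to `Φ`: alternating words of length `≥ 2` vanish. -/
def TrivIndep {ι : Type*} (Φ : B → ℂ) (Fj : ι → Set B) : Prop :=
  ∀ (n : ℕ) (idx : Fin (n + 2) → ι) (f : Fin (n + 2) → B),
    (∀ k : Fin (n + 1), idx k.castSucc ≠ idx k.succ) →
    (∀ k, f k ∈ Fj (idx k)) →
    Φ (List.ofFn f).prod = 0

/-- Boolean independence with respect to `ψ`. -/
def BoolIndep {ι : Type*} (ψ : B → ℂ) (C : ι → Set B) : Prop :=
  ∀ (n : ℕ) (idx : Fin (n + 1) → ι) (c : Fin (n + 1) → B),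
    (∀ k : Fin n, idx k.castSucc ≠ idx k.succ) →
    (∀ k, c k ∈ C (idx k)) →
    ψ (List.ofFn c).prod = ∏ k, ψ (c k)

/-- Conditional freeness with respect to `(φ, ψ)`. -/
def CFree {ι : Type*} (φ ψ : B → ℂ) (Alg : ι → Set B) : Prop :=
  IsFreeFamily φ Alg ∧
  ∀ (n : ℕ) (idx : Fin (n + 1) → ι) (b : Fin (n + 1) → B),
    (∀ k : Fin n, idx k.castSucc ≠ idx k.succ) →
    (∀ k, b k ∈ Alg (idx k)) → (∀ k, φ (b k) = 0) →
    ψ (List.ofFn b).prod = ∏ k, ψ (b k)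

/-- The unital subspace `ℂ·1_B + F₁`. -/
def unitize (F₁ : Set B) : Set B :=
  {x | ∃ c : ℂ, ∃ f ∈ F₁, x = algebraMap ℂ B c + f}

/-- The set of alternating words `a₀ f₁ a₁ ⋯ fₙ aₙ` with letters from `A₁` and `F₁`. -/
def wordSet (A₁ F₁ : Set B) : Set B :=
  {x | ∃ n : ℕ, 0 < n ∧ ∃ (a : Fin (n + 1) → B) (f : Fin n → B),
    (∀ k, a k ∈ A₁) ∧ (∀ k, f k ∈ F₁) ∧ x = altWord a f}

/-- `A₁⟨F₁⟩₀`: the linear span of all alternating words `a₀ f₁ a₁ ⋯ fₙ aₙ`. -/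
def wordSpan (A₁ F₁ : Set B) : Set B :=
  (Submodule.span ℂ (wordSet A₁ F₁) : Submodule ℂ B)

/-- The type B′ subalgebra `A₁⟨F₁⟩ = A₁ + A₁⟨F₁⟩₀`. -/
def typeBSub (A₁ F₁ : Set B) : Set B :=
  {x | ∃ a ∈ A₁, ∃ f ∈ wordSpan A₁ F₁, x = a + f}

/-- `(tₙ)` is the inverse Markov–Krein transform of the sequence `(mₙ)`:
`(n+1)·mₙ = Σ_{j=0}^{n} tⱼ m_{n−j}` for all `n ≥ 0`. -/
def IsInvMK (m t : ℕ → ℂ) : Prop :=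
  ∀ n : ℕ, ((n : ℂ) + 1) * m n = ∑ j ∈ Finset.range (n + 1), t j * m (n - j)

/-!
Functionals are applied coefficientwise to power series over `B`. Let `p = 1 - q`,
`R = ∑ (a₁ a₂)ⁿ Xⁿ` and `M = φ(R)`. Cyclic-antimonotone independence makes `q` behave like a
rank-one element: `φ'(f q g) = φ'(q) φ(f g)` and `φ'(f q g q h) = φ(g) φ'(f q h)` whenever `f`, `g`
have coefficients in `A`. Under `φ'` the resolvent of `a₁ a₂ p` therefore solves a scalar equation,
and the resolvent of `a₁ p a₂ p` a `2 × 2` linear system with matrix `!![M, N; U, M]`, where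
`N = φ(R a₁ X)` and `U = φ(R a₂)`.

Freeness is used through the traciality of `φ` on the algebra generated by `a₁` and `a₂`, and
through the value `M² - U N = M` of the determinant. For the latter, choose centered elements `Qₙ`
so that `T = 1 + a₁ X ∑ Qₙ Xⁿ` satisfies `T = R - u R a₁ X` with the scalar series `u = φ(a₂ T)`;
by freeness `φ(T) = 1`, and eliminating `u` leaves the determinant identity.

Solving both systems, with the derivative of the determinant identity in the second one, gives
`M φ'(p (resolvent)) = -φ'(q) (X M)'` in both cases: `φ'` yields `-φ'(q)` times the inverse
Markov–Krein transform of the moments of `a₁ a₂`.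
-/

section CenteredWords

variable {ι : Type*} {φ : B →ₗ[ℂ] ℂ} {Alg : ι → Subalgebra ℂ B}

/-- The centering map `x ↦ x - φ x • 1` of a functional `φ`. -/
def center (φ : B →ₗ[ℂ] ℂ) : B →ₗ[ℂ] B := LinearMap.id - φ.smulRight 1

theorem center_apply (x : B) : center φ x = x - φ x • 1 := rfl

theorem map_center (hφ1 : φ 1 = 1) (x : B) : φ (center φ x) = 0 := by
  simp [center_apply, hφ1]

theorem center_mem {S : Subalgebra ℂ B} {x : B} (hx : x ∈ S) : center φ x ∈ S :=
  sub_mem hx (S.smul_mem S.one_mem _)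

theorem center_add_smul_one (x : B) : center φ x + φ x • 1 = x :=
  sub_add_cancel _ _

theorem center_eq_self {x : B} (hx : φ x = 0) : center φ x = x := by
  simp [center_apply, hx]

/-- A word in coloured letters (colour, element) whose letters are centered elements of the
algebra of their colour, adjacent letters having different colours. The element of `B` it spells
is `(l.map Prod.snd).prod`. -/
def IsCenteredWord (φ : B →ₗ[ℂ] ℂ) (Alg : ι → Subalgebra ℂ B) (l : List (ι × B)) : Prop :=
  (l.map Prod.fst).IsChain (· ≠ ·) ∧ ∀ y ∈ l, y.2 ∈ Alg y.1 ∧ φ y.2 = 0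

theorem IsFreeFamily.map_prod_eq_zero (hfree : IsFreeFamily φ fun i => (Alg i : Set B))
    {l : List (ι × B)} (hl : IsCenteredWord φ Alg l) (hne : l ≠ []) :
    φ (l.map Prod.snd).prod = 0 := by
  obtain ⟨n, hn⟩ : ∃ n, l.length = n + 1 := Nat.exists_eq_succ_of_ne_zero (by simpa using hne)
  obtain ⟨y, rfl⟩ : ∃ y : Fin (n + 1) → ι × B, List.ofFn y = l :=
    ⟨fun k => l.get (k.cast hn.symm), by rw [← List.ofFn_congr hn, List.ofFn_get]⟩
  have hmem (k) : (y k).2 ∈ Alg (y k).1 ∧ φ (y k).2 = 0 := hl.2 _ (List.mem_ofFn.2 ⟨k, rfl⟩)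
  have hchain := hl.1
  rw [List.map_ofFn, List.isChain_ofFn] at hchain
  rw [List.map_ofFn]
  exact hfree n (fun k => (y k).1) (fun k => (y k).2) (fun k => hchain k (by omega))
    (fun k => (hmem k).1) (fun k => (hmem k).2)

theorem IsCenteredWord.of_append_left {l t : List (ι × B)} (h : IsCenteredWord φ Alg (l ++ t)) :
    IsCenteredWord φ Alg l :=
  ⟨(List.map_append ▸ h.1).left_of_append, fun y hy => h.2 y (List.mem_append_left _ hy)⟩

theorem IsCenteredWord.of_append_right {l t : List (ι × B)} (h : IsCenteredWord φ Alg (l ++ t)) :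
    IsCenteredWord φ Alg t :=
  ⟨(List.map_append ▸ h.1).right_of_append, fun y hy => h.2 y (List.mem_append_right _ hy)⟩

theorem isCenteredWord_singleton {i : ι} {x : B} (hx : x ∈ Alg i) (hφx : φ x = 0) :
    IsCenteredWord φ Alg [(i, x)] :=
  ⟨List.isChain_singleton _, List.forall_mem_singleton.2 ⟨hx, hφx⟩⟩

theorem IsCenteredWord.replace {l t : List (ι × B)} {i : ι} {x y : B}
    (h : IsCenteredWord φ Alg (l ++ (i, y) :: t)) (hx : x ∈ Alg i) (hφx : φ x = 0) :
    IsCenteredWord φ Alg (l ++ (i, x) :: t) := by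
  refine ⟨by simpa using h.1, fun z hz => ?_⟩
  rcases List.mem_append.1 hz with hz | hz
  · exact h.2 z (List.mem_append_left _ hz)
  · rcases List.mem_cons.1 hz with rfl | hz
    · exact ⟨hx, hφx⟩
    · exact h.2 z (List.mem_append_right _ (List.mem_cons_of_mem _ hz))

theorem IsCenteredWord.zero_cons {t : List (ι × B)} {i j : ι} {y : B}
    (h : IsCenteredWord φ Alg ((j, y) :: t)) (hij : i ≠ j) :
    IsCenteredWord φ Alg ((i, 0) :: (j, y) :: t) :=
  ⟨List.isChain_cons_cons.2 ⟨hij, h.1⟩,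
    List.forall_mem_cons.2 ⟨⟨zero_mem _, map_zero _⟩, h.2⟩⟩

theorem IsCenteredWord.append_zero {l : List (ι × B)} {i j : ι} {y : B}
    (h : IsCenteredWord φ Alg (l ++ [(j, y)])) (hji : j ≠ i) :
    IsCenteredWord φ Alg (l ++ [(j, y)] ++ [(i, 0)]) := by
  refine ⟨?_, List.forall_mem_append.2 ⟨h.2, ?_⟩⟩
  · have hchain := h.1
    simp_all [List.isChain_append]
  · exact List.forall_mem_singleton.2 ⟨zero_mem _, map_zero _⟩

theorem IsFreeFamily.map_prod_replace_eq_zero (hφ1 : φ 1 = 1)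
    (hfree : IsFreeFamily φ fun i => (Alg i : Set B)) {l t : List (ι × B)} {i : ι} {x y : B}
    (h : IsCenteredWord φ Alg (l ++ (i, y) :: t)) (hlt : IsCenteredWord φ Alg (l ++ t))
    (hne : l ++ t ≠ []) (hx : x ∈ Alg i) :
    φ ((l.map Prod.snd).prod * x * (t.map Prod.snd).prod) = 0 := by
  have hcenter := hfree.map_prod_eq_zero (h.replace (center_mem hx) (map_center hφ1 x)) (by simp)
  have hdrop := hfree.map_prod_eq_zero hlt hne
  simp only [List.map_append, List.map_cons, List.prod_append, List.prod_cons, ← mul_assoc]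
    at hcenter hdrop
  rw [← center_add_smul_one (φ := φ) x, mul_add, add_mul, map_add, hcenter, mul_smul_comm,
    mul_one, smul_mul_assoc, map_smul, hdrop, smul_zero, add_zero]

theorem IsFreeFamily.map_mul_prod_eq_zero (hφ1 : φ 1 = 1)
    (hfree : IsFreeFamily φ fun i => (Alg i : Set B)) {i : ι} {x : B} (hx : x ∈ Alg i)
    {l : List (ι × B)} (hl : IsCenteredWord φ Alg l) (hnil : l ≠ []) (hne : ∀ y, l ≠ [(i, y)]) :
    φ (x * (l.map Prod.snd).prod) = 0 := by
  obtain ⟨⟨j, y⟩, t, rfl⟩ := List.exists_cons_of_ne_nil hnil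
  by_cases hij : i = j
  · subst hij
    have ht : t ≠ [] := fun ht => hne y (by rw [ht])
    simpa [mul_assoc] using hfree.map_prod_replace_eq_zero (l := []) hφ1 hl
      (hl.of_append_right (l := [(i, y)])) ht (mul_mem hx (hl.2 _ List.mem_cons_self).1)
  · simpa using hfree.map_prod_replace_eq_zero (l := []) hφ1 (hl.zero_cons hij) hl hnil hx

theorem IsFreeFamily.map_prod_mul_eq_zero (hφ1 : φ 1 = 1)
    (hfree : IsFreeFamily φ fun i => (Alg i : Set B)) {i : ι} {x : B} (hx : x ∈ Alg i)
    {l : List (ι × B)} (hl : IsCenteredWord φ Alg l) (hnil : l ≠ []) (hne : ∀ y, l ≠ [(i, y)]) :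
    φ ((l.map Prod.snd).prod * x) = 0 := by
  obtain ⟨t, ⟨j, y⟩, rfl⟩ := (List.eq_nil_or_concat' l).resolve_left hnil
  by_cases hji : j = i
  · subst hji
    have ht : t ≠ [] := fun ht => hne y (by rw [ht, List.nil_append])
    simpa [mul_assoc] using hfree.map_prod_replace_eq_zero (t := []) hφ1 hl
      (by simpa using hl.of_append_left) (by simpa using ht)
      (mul_mem (hl.2 (j, y) (by simp)).1 hx)
  · simpa using hfree.map_prod_replace_eq_zero (t := []) hφ1 (hl.append_zero hji)
      (by simpa using hl) (by simp) hx

/-- The span of the elements spelled by centered words whose last letter has colour `j`. -/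
def centeredSpan (φ : B →ₗ[ℂ] ℂ) (Alg : ι → Subalgebra ℂ B) (j : ι) : Submodule ℂ B :=
  Submodule.span ℂ {z | ∃ t y, IsCenteredWord φ Alg (t ++ [(j, y)]) ∧
    z = ((t ++ [(j, y)]).map Prod.snd).prod}

theorem prod_mem_centeredSpan {t : List (ι × B)} {j : ι} {y : B}
    (h : IsCenteredWord φ Alg (t ++ [(j, y)])) :
    ((t ++ [(j, y)]).map Prod.snd).prod ∈ centeredSpan φ Alg j :=
  Submodule.subset_span ⟨t, y, h, rfl⟩

theorem mem_centeredSpan {i : ι} {x : B} (hx : x ∈ Alg i) (hφx : φ x = 0) :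
    x ∈ centeredSpan φ Alg i := by
  simpa using prod_mem_centeredSpan (t := []) (isCenteredWord_singleton hx hφx)

theorem IsFreeFamily.map_eq_zero_of_mem_centeredSpan
    (hfree : IsFreeFamily φ fun i => (Alg i : Set B)) {j : ι} {z : B}
    (hz : z ∈ centeredSpan φ Alg j) : φ z = 0 := by
  suffices h : centeredSpan φ Alg j ≤ LinearMap.ker φ from h hz
  refine Submodule.span_le.2 ?_
  rintro _ ⟨t, y, h, rfl⟩
  exact hfree.map_prod_eq_zero h (by simp)

theorem IsFreeFamily.map_mul_eq_zero_of_mem_centeredSpan (hφ1 : φ 1 = 1)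
    (hfree : IsFreeFamily φ fun i => (Alg i : Set B)) {i j : ι} (hij : i ≠ j) {x z : B}
    (hx : x ∈ Alg i) (hz : z ∈ centeredSpan φ Alg j) : φ (x * z) = 0 := by
  suffices h : centeredSpan φ Alg j ≤ LinearMap.ker (φ ∘ₗ LinearMap.mulLeft ℂ x) from h hz
  refine Submodule.span_le.2 ?_
  rintro _ ⟨t, y, h, rfl⟩
  refine hfree.map_mul_prod_eq_zero hφ1 hx h (by simp) fun y' he => ?_
  exact hij (by simpa using (congrArg (fun l => l.getLast?.map Prod.fst) he).symm)

theorem IsCenteredWord.mul_prod_mem_centeredSpan (hφ1 : φ 1 = 1) {t : List (ι × B)} {i j : ι}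
    {x y y' : B} (h : IsCenteredWord φ Alg ((i, y') :: (t ++ [(j, y)]))) (hx : x ∈ Alg i) :
    x * ((t ++ [(j, y)]).map Prod.snd).prod ∈ centeredSpan φ Alg j := by
  rw [← center_add_smul_one (φ := φ) x, add_mul, smul_mul_assoc, one_mul]
  refine add_mem ?_ (Submodule.smul_mem _ _ (prod_mem_centeredSpan
    (h.of_append_right (l := [(i, y')]))))
  exact prod_mem_centeredSpan (t := (i, center φ x) :: t)
    (h.replace (l := []) (center_mem hx) (map_center hφ1 x))

theorem IsFreeFamily.center_mul_mem_centeredSpan (hφ1 : φ 1 = 1)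
    (hfree : IsFreeFamily φ fun i => (Alg i : Set B)) {i j : ι} {x z : B}
    (hx : x ∈ Alg i) (hz : z ∈ centeredSpan φ Alg j) :
    center φ (x * z) ∈ centeredSpan φ Alg j := by
  suffices h : centeredSpan φ Alg j ≤
      (centeredSpan φ Alg j).comap (center φ ∘ₗ LinearMap.mulLeft ℂ x) from h hz
  have center_mem_of_mem {w : B} (hw : w ∈ centeredSpan φ Alg j) :
      center φ w ∈ centeredSpan φ Alg j := by
    rwa [center_eq_self (hfree.map_eq_zero_of_mem_centeredSpan hw)]
  refine Submodule.span_le.2 ?_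
  rintro _ ⟨t, y, h, rfl⟩
  change center φ (x * ((t ++ [(j, y)]).map Prod.snd).prod) ∈ centeredSpan φ Alg j
  cases t with
  | nil =>
    by_cases hij : i = j
    · subst hij
      simpa using mem_centeredSpan (center_mem (mul_mem hx (h.2 (i, y) (by simp)).1))
        (map_center hφ1 _)
    · exact center_mem_of_mem ((h.zero_cons hij).mul_prod_mem_centeredSpan (t := []) hφ1 hx)
  | cons a t =>
    obtain ⟨k, y'⟩ := a
    by_cases hik : i = k
    · subst hik
      have hxy' : x * y' ∈ Alg i := mul_mem hx (h.2 (i, y') (by simp)).1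
      simpa [mul_assoc] using center_mem_of_mem (h.mul_prod_mem_centeredSpan hφ1 hxy')
    · exact center_mem_of_mem
        ((h.zero_cons hik).mul_prod_mem_centeredSpan (t := (k, y') :: t) hφ1 hx)

theorem adjoin_toSubmodule_le {𝕜 S : Type*} [CommSemiring 𝕜] [Semiring S] [Algebra 𝕜 S]
    {s : Set S} {N : Submodule 𝕜 S} (h1 : 1 ∈ N)
    (hmul : ∀ x ∈ s, N ≤ N.comap (LinearMap.mulLeft 𝕜 x)) :
    (Algebra.adjoin 𝕜 s).toSubmodule ≤ N := by
  rw [Algebra.adjoin_eq_span, Submodule.span_le]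
  intro z hz
  induction hz using Submonoid.closure_induction_left with
  | one => exact h1
  | mul_left x hx z _ ih => exact hmul x hx ih

theorem IsFreeFamily.adjoin_iUnion_le_iSup_centeredSpan (hφ1 : φ 1 = 1)
    (hfree : IsFreeFamily φ fun i => (Alg i : Set B)) :
    (Algebra.adjoin ℂ (⋃ i, (Alg i : Set B))).toSubmodule ≤
      Submodule.span ℂ {1} ⊔ ⨆ j, centeredSpan φ Alg j := by
  have hone : (1 : B) ∈ Submodule.span ℂ {1} ⊔ ⨆ j, centeredSpan φ Alg j :=
    Submodule.mem_sup_left (Submodule.mem_span_singleton_self 1)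
  have mem_of_center_mem {j : ι} {x : B} (hx : center φ x ∈ centeredSpan φ Alg j) :
      x ∈ Submodule.span ℂ {1} ⊔ ⨆ j, centeredSpan φ Alg j := by
    rw [← center_add_smul_one (φ := φ) x]
    exact add_mem (Submodule.mem_sup_right (Submodule.mem_iSup_of_mem j hx))
      (Submodule.smul_mem _ _ hone)
  refine adjoin_toSubmodule_le hone fun x hx => ?_
  obtain ⟨i, hx⟩ := Set.mem_iUnion.1 hx
  refine sup_le (Submodule.span_le.2 ?_) (iSup_le fun j z hz => ?_)
  · rintro _ rfl
    simpa using mem_of_center_mem (mem_centeredSpan (center_mem hx) (map_center hφ1 x))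
  · exact mem_of_center_mem (hfree.center_mul_mem_centeredSpan hφ1 hx hz)

theorem IsFreeFamily.map_mul_prod_comm (hφ1 : φ 1 = 1)
    (hfree : IsFreeFamily φ fun i => (Alg i : Set B)) {i : ι} {x : B} (hx : x ∈ Alg i)
    (hcomm : ∀ y ∈ Alg i, φ (x * y) = φ (y * x)) {l : List (ι × B)} (hl : IsCenteredWord φ Alg l) :
    φ (x * (l.map Prod.snd).prod) = φ ((l.map Prod.snd).prod * x) := by
  by_cases hnil : l = []
  · simp [hnil]
  by_cases hsingle : ∃ y, l = [(i, y)]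
  · obtain ⟨y, rfl⟩ := hsingle
    simpa using hcomm y (hl.2 (i, y) (by simp)).1
  · push Not at hsingle
    rw [hfree.map_mul_prod_eq_zero hφ1 hx hl hnil hsingle,
      hfree.map_prod_mul_eq_zero hφ1 hx hl hnil hsingle]

theorem IsFreeFamily.map_mul_comm (hφ1 : φ 1 = 1)
    (hfree : IsFreeFamily φ fun i => (Alg i : Set B))
    (hcomm : ∀ i, ∀ x ∈ Alg i, ∀ y ∈ Alg i, φ (x * y) = φ (y * x)) {x y : B}
    (hx : x ∈ Algebra.adjoin ℂ (⋃ i, (Alg i : Set B)))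
    (hy : y ∈ Algebra.adjoin ℂ (⋃ i, (Alg i : Set B))) : φ (x * y) = φ (y * x) := by
  induction hx using Algebra.adjoin_induction generalizing y with
  | mem x hx =>
    obtain ⟨i, hx⟩ := Set.mem_iUnion.1 hx
    suffices h : Submodule.span ℂ {1} ⊔ ⨆ j, centeredSpan φ Alg j ≤
        LinearMap.eqLocus (φ ∘ₗ LinearMap.mulLeft ℂ x) (φ ∘ₗ LinearMap.mulRight ℂ x) from
      h (hfree.adjoin_iUnion_le_iSup_centeredSpan hφ1 hy)
    refine sup_le (Submodule.span_le.2 ?_) (iSup_le fun j => Submodule.span_le.2 ?_)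
    · rintro _ rfl
      simp
    · rintro _ ⟨t, z, hw, rfl⟩
      exact hfree.map_mul_prod_comm hφ1 hx (hcomm i x hx) hw
  | algebraMap r => rw [Algebra.commutes]
  | add x x' _ _ ih ih' => rw [add_mul, mul_add, map_add, map_add, ih hy, ih' hy]
  | mul x x' hx hx' ih ih' =>
    calc φ (x * x' * y) = φ (x' * y * x) := by rw [mul_assoc, ih (mul_mem hx' hy)]
      _ = φ (y * (x * x')) := by rw [mul_assoc, ih' (mul_mem hy hx), mul_assoc]

end CenteredWords

noncomputable section CoefficientwiseMap

open PowerSeries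

variable {𝕜 S : Type*} [CommRing 𝕜] [Ring S] [Algebra 𝕜 S]

/-- The extension of a linear functional `ψ : S → 𝕜` to power series, applied to each
coefficient. -/
def mapCoeff (ψ : S →ₗ[𝕜] 𝕜) : S⟦X⟧ →+ 𝕜⟦X⟧ where
  toFun f := mk fun n => ψ (coeff n f)
  map_zero' := by ext; simp
  map_add' f g := by ext; simp

@[simp]
theorem coeff_mapCoeff (ψ : S →ₗ[𝕜] 𝕜) (f : S⟦X⟧) (n : ℕ) :
    coeff n (mapCoeff ψ f) = ψ (coeff n f) :=
  coeff_mk n fun m => ψ (coeff m f)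

@[simp]
theorem constantCoeff_mapCoeff (ψ : S →ₗ[𝕜] 𝕜) (f : S⟦X⟧) :
    constantCoeff (mapCoeff ψ f) = ψ (constantCoeff f) := by
  rw [← coeff_zero_eq_constantCoeff_apply, coeff_mapCoeff, coeff_zero_eq_constantCoeff_apply]

theorem mapCoeff_mul_X (ψ : S →ₗ[𝕜] 𝕜) (f : S⟦X⟧) : mapCoeff ψ (f * X) = X * mapCoeff ψ f := by
  ext (_ | n)
  · simp
  · simp [coeff_succ_mul_X, coeff_succ_X_mul]

theorem mapCoeff_map_algebraMap_mul (ψ : S →ₗ[𝕜] 𝕜) (g : 𝕜⟦X⟧) (f : S⟦X⟧) :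
    mapCoeff ψ (map (algebraMap 𝕜 S) g * f) = g * mapCoeff ψ f := by
  ext n
  simp [coeff_mul, ← Algebra.smul_def]

theorem map_algebraMap_mul_comm (g : 𝕜⟦X⟧) (f : S⟦X⟧) :
    map (algebraMap 𝕜 S) g * f = f * map (algebraMap 𝕜 S) g := by
  ext n
  rw [coeff_mul, coeff_mul, ← Finset.Nat.sum_antidiagonal_swap]
  simp [Algebra.commutes]

theorem C_mul_X_mul_C (x y : S) : C x * X * C y = C (x * y) * X := by
  rw [mul_assoc, X_mul, ← mul_assoc, ← map_mul]

theorem mapCoeff_one {ψ : S →ₗ[𝕜] 𝕜} (hψ : ψ 1 = 1) : mapCoeff ψ 1 = 1 := by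
  ext n
  simp [coeff_one, apply_ite ψ, hψ]

/-- The subring of `S⟦X⟧` of power series with all coefficients in the subalgebra `A`. -/
def coeffSubring (A : Subalgebra 𝕜 S) : Subring S⟦X⟧ := (map A.val.toRingHom).range

theorem mem_coeffSubring {A : Subalgebra 𝕜 S} {f : S⟦X⟧} :
    f ∈ coeffSubring A ↔ ∀ n, coeff n f ∈ A := by
  constructor
  · rintro ⟨g, rfl⟩ n
    simp
  · exact fun h => ⟨mk fun n => ⟨coeff n f, h n⟩, by ext; simp⟩

theorem C_mem_coeffSubring {A : Subalgebra 𝕜 S} {a : S} (ha : a ∈ A) : C a ∈ coeffSubring A :=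
  ⟨C ⟨a, ha⟩, by simp⟩

theorem X_mem_coeffSubring (A : Subalgebra 𝕜 S) : (X : S⟦X⟧) ∈ coeffSubring A :=
  ⟨X, by simp⟩

theorem coeffSubring_mono {A D : Subalgebra 𝕜 S} (h : A ≤ D) : coeffSubring A ≤ coeffSubring D :=
  fun _ hf => mem_coeffSubring.2 fun n => h (mem_coeffSubring.1 hf n)

theorem mapCoeff_eq_zero {ψ : S →ₗ[𝕜] 𝕜} {A : Subalgebra 𝕜 S} (hψ : ∀ a ∈ A, ψ a = 0) {f : S⟦X⟧}
    (hf : f ∈ coeffSubring A) : mapCoeff ψ f = 0 := by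
  ext n
  simpa using hψ _ (mem_coeffSubring.1 hf n)

theorem mapCoeff_mul_comm {ψ : S →ₗ[𝕜] 𝕜} {A : Subalgebra 𝕜 S}
    (hψ : ∀ x ∈ A, ∀ y ∈ A, ψ (x * y) = ψ (y * x)) {f g : S⟦X⟧} (hf : f ∈ coeffSubring A)
    (hg : g ∈ coeffSubring A) : mapCoeff ψ (f * g) = mapCoeff ψ (g * f) := by
  ext n
  simp only [coeff_mapCoeff, coeff_mul, map_sum]
  rw [← Finset.Nat.sum_antidiagonal_swap]
  exact Finset.sum_congr rfl fun _ _ => hψ _ (mem_coeffSubring.1 hf _) _ (mem_coeffSubring.1 hg _)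

/-- The geometric series `∑ aⁿ Xⁿ = (1 - a X)⁻¹`. -/
def geomSeries (a : S) : S⟦X⟧ := mk fun n => a ^ n

@[simp]
theorem coeff_geomSeries (a : S) (n : ℕ) : coeff n (geomSeries a) = a ^ n :=
  coeff_mk n _

@[simp]
theorem constantCoeff_geomSeries (a : S) : constantCoeff (geomSeries a) = 1 := by
  rw [← coeff_zero_eq_constantCoeff_apply, coeff_geomSeries, pow_zero]

theorem geomSeries_mem_coeffSubring {A : Subalgebra 𝕜 S} {a : S} (ha : a ∈ A) :
    geomSeries a ∈ coeffSubring A :=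
  mem_coeffSubring.2 fun n => by simpa using pow_mem ha n

theorem geomSeries_eq_one_add_mul (a : S) : geomSeries a = 1 + C a * X * geomSeries a := by
  ext (_ | n)
  · simp [mul_assoc]
  · simp [mul_assoc, coeff_succ_X_mul, coeff_one, pow_succ']

theorem geomSeries_mul_eq_sub_one (a : S) : geomSeries a * (C a * X) = geomSeries a - 1 := by
  ext (_ | n)
  · simp [← mul_assoc]
  · simp [← mul_assoc, coeff_succ_mul_X, coeff_one, pow_succ]

theorem coeff_geomSeries_mul_self (a : S) (n : ℕ) :
    coeff n (geomSeries a * geomSeries a) = (n + 1) • a ^ n := by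
  have hterm (p) (hp : p ∈ Finset.HasAntidiagonal.antidiagonal n) :
      coeff p.1 (geomSeries a) * coeff p.2 (geomSeries a) = a ^ n := by
    rw [coeff_geomSeries, coeff_geomSeries, ← pow_add, Finset.HasAntidiagonal.mem_antidiagonal.1 hp]
  rw [coeff_mul, Finset.sum_congr rfl hterm, Finset.sum_const, Finset.Nat.card_antidiagonal]

theorem mapCoeff_geomSeries_mul_self_mul_C (ψ : S →ₗ[𝕜] 𝕜) (a x : S) :
    mapCoeff ψ (geomSeries a * geomSeries a * C x) =
      derivative 𝕜 (X * mapCoeff ψ (geomSeries a * C x)) := by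
  ext n
  rw [coeff_derivative, coeff_succ_X_mul, coeff_mapCoeff, coeff_mapCoeff, coeff_mul_C, coeff_mul_C,
    coeff_geomSeries_mul_self, coeff_geomSeries, smul_mul_assoc, map_nsmul, nsmul_eq_mul, mul_comm]
  push_cast
  rfl

theorem mapCoeff_geomSeries_mul_mul_geomSeries {ψ : S →ₗ[𝕜] 𝕜} {A : Subalgebra 𝕜 S}
    (hψ : ∀ x ∈ A, ∀ y ∈ A, ψ (x * y) = ψ (y * x)) {a x : S} (ha : a ∈ A) (hx : x ∈ A) :
    mapCoeff ψ (geomSeries a * C x * geomSeries a) =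
      derivative 𝕜 (X * mapCoeff ψ (geomSeries a * C x)) := by
  have hR : geomSeries a ∈ coeffSubring A := geomSeries_mem_coeffSubring ha
  rw [mapCoeff_mul_comm hψ (mul_mem hR (C_mem_coeffSubring hx)) hR, ← mul_assoc,
    mapCoeff_geomSeries_mul_self_mul_C]

theorem mapCoeff_geomSeries_mul_mul_X_mul_geomSeries {ψ : S →ₗ[𝕜] 𝕜} {A : Subalgebra 𝕜 S}
    (hψ : ∀ x ∈ A, ∀ y ∈ A, ψ (x * y) = ψ (y * x)) {a x : S} (ha : a ∈ A) (hx : x ∈ A) :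
    mapCoeff ψ (geomSeries a * (C x * X) * geomSeries a) =
      X * derivative 𝕜 (mapCoeff ψ (geomSeries a * (C x * X))) := by
  have hX : geomSeries a * (C x * X) * geomSeries a = geomSeries a * C x * geomSeries a * X := by
    simp only [mul_assoc, X_mul]
  rw [hX, mapCoeff_mul_X, mapCoeff_geomSeries_mul_mul_geomSeries hψ ha hx, ← mapCoeff_mul_X,
    mul_assoc]

end CoefficientwiseMap

section CenteredIterate

open PowerSeries

variable {ι : Type*} {φ : B →ₗ[ℂ] ℂ} {Alg : ι → Subalgebra ℂ B}

/-- The elements `Q₀ = a₂°`, `Qₙ₊₁ = (a₂ a₁ Qₙ)°`, where `x°` is the centering of `x`. By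
freeness, `φ (a₁ Qₙ) = 0` whatever the value of `φ a₁`. -/
def centeredIterate (φ : B →ₗ[ℂ] ℂ) (a₁ a₂ : B) : ℕ → B
  | 0 => center φ a₂
  | n + 1 => center φ (a₂ * (a₁ * centeredIterate φ a₁ a₂ n))

theorem IsFreeFamily.centeredIterate_mem (hφ1 : φ 1 = 1)
    (hfree : IsFreeFamily φ fun i => (Alg i : Set B)) {i j : ι} (hij : i ≠ j) {a₁ a₂ : B}
    (ha₁ : a₁ ∈ Alg i) (ha₂ : a₂ ∈ Alg j) (n : ℕ) :
    centeredIterate φ a₁ a₂ n ∈ centeredSpan φ Alg j := by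
  induction n with
  | zero => exact mem_centeredSpan (center_mem ha₂) (map_center hφ1 a₂)
  | succ n ih =>
    have h := hfree.center_mul_mem_centeredSpan hφ1 ha₁ ih
    rw [center_eq_self (hfree.map_mul_eq_zero_of_mem_centeredSpan hφ1 hij ha₁ ih)] at h
    exact hfree.center_mul_mem_centeredSpan hφ1 ha₂ h

theorem mk_centeredIterate (φ : B →ₗ[ℂ] ℂ) (a₁ a₂ : B) :
    let T := 1 + C a₁ * X * mk (centeredIterate φ a₁ a₂)
    mk (centeredIterate φ a₁ a₂) = C a₂ * T - map (algebraMap ℂ B) (mapCoeff φ (C a₂ * T)) := by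
  ext (_ | n)
  · simp [centeredIterate, center_apply, Algebra.algebraMap_eq_smul_one, mul_assoc,
      -coeff_zero_eq_constantCoeff, coeff_zero_X_mul]
  · simp [centeredIterate, center_apply, Algebra.algebraMap_eq_smul_one, mul_assoc, coeff_one,
      coeff_succ_X_mul]

theorem one_add_mul_mk_centeredIterate_eq (φ : B →ₗ[ℂ] ℂ) (a₁ a₂ : B) :
    let R := geomSeries (a₁ * a₂)
    let T := 1 + C a₁ * X * mk (centeredIterate φ a₁ a₂)
    T = R - map (algebraMap ℂ B) (mapCoeff φ (C a₂ * T)) * (R * (C a₁ * X)) := by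
  intro R T
  set u := map (algebraMap ℂ B) (mapCoeff φ (C a₂ * T))
  have hT : T = 1 + C a₁ * X * (C a₂ * T - u) := by
    rw [← mk_centeredIterate]
  have hR : R * (C a₁ * X * C a₂) = R - 1 := by
    rw [C_mul_X_mul_C, geomSeries_mul_eq_sub_one]
  rw [map_algebraMap_mul_comm]
  linear_combination (norm := noncomm_ring) R * hT + hR * T

theorem IsFreeFamily.mapCoeff_one_add_mul_mk_centeredIterate (hφ1 : φ 1 = 1)
    (hfree : IsFreeFamily φ fun i => (Alg i : Set B)) {i j : ι} (hij : i ≠ j) {a₁ a₂ : B}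
    (ha₁ : a₁ ∈ Alg i) (ha₂ : a₂ ∈ Alg j) :
    mapCoeff φ (1 + C a₁ * X * mk (centeredIterate φ a₁ a₂)) = 1 := by
  suffices h : mapCoeff φ (C a₁ * X * mk (centeredIterate φ a₁ a₂)) = 0 by
    rw [map_add, h, mapCoeff_one hφ1, add_zero]
  ext (_ | n)
  · simp [mul_assoc]
  · simpa [mul_assoc, coeff_succ_X_mul] using
      hfree.map_mul_eq_zero_of_mem_centeredSpan hφ1 hij ha₁
        (hfree.centeredIterate_mem hφ1 hij ha₁ ha₂ n)

theorem IsFreeFamily.mapCoeff_geomSeries_mul_self_sub_eq (hφ1 : φ 1 = 1)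
    (hfree : IsFreeFamily φ fun i => (Alg i : Set B)) {i j : ι} (hij : i ≠ j) {a₁ a₂ : B}
    (ha₁ : a₁ ∈ Alg i) (ha₂ : a₂ ∈ Alg j) {A : Subalgebra ℂ B} (ha₁A : a₁ ∈ A) (ha₂A : a₂ ∈ A)
    (htr : ∀ x ∈ A, ∀ y ∈ A, φ (x * y) = φ (y * x)) :
    let R := geomSeries (a₁ * a₂)
    mapCoeff φ R * mapCoeff φ R - mapCoeff φ (R * C a₂) * mapCoeff φ (R * (C a₁ * X)) =
      mapCoeff φ R := by
  intro R
  have hβ := C_mem_coeffSubring ha₂A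
  have hR : R ∈ coeffSubring A := geomSeries_mem_coeffSubring (mul_mem ha₁A ha₂A)
  have hRα : R * (C a₁ * X) ∈ coeffSubring A :=
    mul_mem hR (mul_mem (C_mem_coeffSubring ha₁A) (X_mem_coeffSubring A))
  have hRαβ : R * (C a₁ * X) * C a₂ = R - 1 := by
    rw [mul_assoc, C_mul_X_mul_C, geomSeries_mul_eq_sub_one]
  set T := 1 + C a₁ * X * mk (centeredIterate φ a₁ a₂)
  set u := mapCoeff φ (C a₂ * T) with hu
  have hTR : T = R - map (algebraMap ℂ B) u * (R * (C a₁ * X)) :=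
    one_add_mul_mk_centeredIterate_eq φ a₁ a₂
  have h1 : mapCoeff φ R - u * mapCoeff φ (R * (C a₁ * X)) = 1 := by
    rw [← mapCoeff_map_algebraMap_mul, ← map_sub, ← hTR]
    exact hfree.mapCoeff_one_add_mul_mk_centeredIterate hφ1 hij ha₁ ha₂
  have h2 : u = mapCoeff φ (R * C a₂) - u * (mapCoeff φ R - 1) := by
    rw [mapCoeff_mul_comm htr hR hβ, ← mapCoeff_one hφ1, ← map_sub, ← hRαβ,
      mapCoeff_mul_comm htr hRα hβ, ← mapCoeff_map_algebraMap_mul, ← map_sub]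
    nth_rw 1 [hu, hTR, mul_sub, ← mul_assoc, ← map_algebraMap_mul_comm, mul_assoc]
  linear_combination mapCoeff φ R * h1 + mapCoeff φ (R * (C a₁ * X)) * h2

end CenteredIterate

section CyclicAntimonotone

variable {A : Subalgebra ℂ B} {φ ψ : B →ₗ[ℂ] ℂ} {q : B}

theorem mul_altWord {S : Type*} [Ring S] {n : ℕ} (x : S) (a : Fin (n + 1) → S) (f : Fin n → S) :
    x * altWord a f = altWord (Function.update a 0 (x * a 0)) f := by
  simp [altWord, mul_assoc]

theorem altWord_cons {S : Type*} [Ring S] {n : ℕ} (x q : S) (a : Fin (n + 1) → S) :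
    altWord (Fin.cons x a : Fin (n + 2) → S) (fun _ => q) = x * (q * altWord a fun _ => q) := by
  simp [altWord, List.ofFn_succ, mul_assoc]

theorem adjoin_insert_le_span_altWord (A : Subalgebra ℂ B) (q : B) :
    (Algebra.adjoin ℂ (insert q (A : Set B))).toSubmodule ≤
      Submodule.span ℂ
        {z | ∃ (n : ℕ) (a : Fin (n + 1) → B), (∀ k, a k ∈ A) ∧ z = altWord a fun _ => q} := by
  refine adjoin_toSubmodule_le
    (Submodule.subset_span ⟨0, 1, fun _ => A.one_mem, by simp [altWord]⟩) fun x hx => ?_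
  refine Submodule.span_le.2 ?_
  rintro _ ⟨n, a, ha, rfl⟩
  rcases hx with rfl | hx
  · refine Submodule.subset_span ⟨n + 1, Fin.cons 1 a, Fin.cases A.one_mem ha, ?_⟩
    simp [altWord_cons]
  · refine Submodule.subset_span ⟨n, _, fun k => ?_, mul_altWord x a _⟩
    by_cases hk : k = 0
    · subst hk
      simpa using mul_mem hx (ha 0)
    · simpa [hk] using ha k

theorem prod_Ioo_zero_last {M : Type*} [CommMonoid M] (n : ℕ) (g : Fin (n + 2) → M) :
    ∏ k ∈ Finset.Ioo 0 (Fin.last (n + 1)), g k = ∏ k : Fin n, g k.castSucc.succ := by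
  have hIoo : Finset.Ioo 0 (Fin.last (n + 1)) =
      Finset.univ.map (Fin.castSuccEmb.trans (Fin.succEmb (n + 1))) := by
    rw [← Fin.succ_last, ← Fin.map_succEmb_Iio, Fin.Iio_last_eq_map, Finset.map_map]
  rw [hIoo, Finset.prod_map]
  rfl

theorem CyclicAntimonotone.map_mul_altWord
    (hcam : CyclicAntimonotone φ ψ (A : Set B) {x | ∃ c : ℂ, x = c • q}) (hq2 : q * q = q)
    {n : ℕ} {a : Fin (n + 1) → B} (ha : ∀ k, a k ∈ A) {x : B} (hx : x ∈ A) :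
    ψ (x * (q * altWord a fun _ => q)) =
      φ (x * a (Fin.last n)) * (∏ k : Fin n, φ (a k.castSucc)) * ψ q := by
  have hqpow : (List.ofFn fun _ : Fin (n + 1) => q).prod = q := by
    rw [List.ofFn_const, List.prod_replicate, IsIdempotentElem.pow_succ_eq n hq2]
  rw [← altWord_cons, hcam (n + 1) n.succ_pos (Fin.cons x a) _ (Fin.cases hx ha)
    fun _ => ⟨1, (one_smul ℂ q).symm⟩, prod_Ioo_zero_last, hqpow, ← Fin.succ_last]
  simp

theorem CyclicAntimonotone.map_mul_mul
    (hcam : CyclicAntimonotone φ ψ (A : Set B) {x | ∃ c : ℂ, x = c • q}) (hq2 : q * q = q)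
    {x y : B} (hx : x ∈ A) (hy : y ∈ A) : ψ (x * (q * y)) = ψ q * φ (x * y) := by
  simpa [altWord, mul_comm] using
    hcam.map_mul_altWord hq2 (n := 0) (a := fun _ => y) (fun _ => hy) hx

theorem CyclicAntimonotone.map_mul_mul_mul_mul
    (hcam : CyclicAntimonotone φ ψ (A : Set B) {x | ∃ c : ℂ, x = c • q}) (hq2 : q * q = q)
    {x y w : B} (hx : x ∈ A) (hy : y ∈ A) (hw : w ∈ Algebra.adjoin ℂ (insert q (A : Set B))) :
    ψ (x * (q * (y * (q * w)))) = φ y * ψ (x * (q * w)) := by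
  suffices h : _ ≤ LinearMap.eqLocus (ψ ∘ₗ LinearMap.mulLeft ℂ (x * (q * (y * q))))
      (φ y • ψ ∘ₗ LinearMap.mulLeft ℂ (x * q)) by
    simpa [mul_assoc] using h (adjoin_insert_le_span_altWord A q hw)
  refine Submodule.span_le.2 ?_
  rintro _ ⟨n, a, ha, rfl⟩
  have hword := hcam.map_mul_altWord hq2 (a := Fin.cons y a) (Fin.cases hy ha) hx
  rw [altWord_cons, Fin.prod_univ_succ, ← Fin.succ_last] at hword
  simp [mul_assoc, mul_left_comm, hword, hcam.map_mul_altWord hq2 ha hx]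

end CyclicAntimonotone

section Resolvent

open PowerSeries

variable {𝕜 S : Type*} [CommRing 𝕜] [Ring S] [Algebra 𝕜 S]

theorem one_sub_mem_adjoin_insert (A : Subalgebra 𝕜 S) (q : S) :
    1 - q ∈ Algebra.adjoin 𝕜 (insert q (A : Set S)) :=
  sub_mem (one_mem _) (Algebra.subset_adjoin (Set.mem_insert _ _))

theorem le_adjoin_insert (A : Subalgebra 𝕜 S) (q : S) :
    A ≤ Algebra.adjoin 𝕜 (insert q (A : Set S)) :=
  fun _ ha => Algebra.subset_adjoin (Set.mem_insert_of_mem q ha)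

theorem eq_sub_mul_of_resolvent {R γ q G : S} (hR : R * γ = R - 1)
    (hG : G = 1 + γ * G - γ * (q * G)) : G = R - (R - 1) * (q * G) := by
  linear_combination (norm := noncomm_ring) R * hG + hR * (G - q * G)

theorem eq_sub_mul_sub_mul_of_resolvent {R α β q H K : S} (hR : R * (α * β) = R - 1)
    (hH : H = 1 + α * K - α * (q * K)) (hK : K = β * H - β * (q * H)) :
    H = R - (R - 1) * (q * H) - R * α * (q * K) := by
  linear_combination (norm := noncomm_ring) R * hH + R * α * hK + hR * (H - q * H)

theorem geomSeries_mul_one_sub_eq (a q : S) :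
    geomSeries (a * (1 - q)) = 1 + C a * X * geomSeries (a * (1 - q)) -
      C a * X * (C q * geomSeries (a * (1 - q))) := by
  nth_rw 1 [geomSeries_eq_one_add_mul, map_mul, map_sub, map_one]
  rw [mul_assoc (C a), ← X_mul]
  noncomm_ring

theorem geomSeries_alternating_eq_sub (a₁ a₂ q : S) :
    let R := geomSeries (a₁ * a₂)
    let H := geomSeries (a₁ * (1 - q) * a₂ * (1 - q))
    let K := C (a₂ * (1 - q)) * H
    H = R - (R - 1) * (C q * H) - R * (C a₁ * X) * (C q * K) := by
  intro R H K
  have hC : C (a₁ * (1 - q) * a₂ * (1 - q)) * X = C a₁ * X * C (1 - q) * C (a₂ * (1 - q)) := by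
    rw [mul_assoc (C a₁ * X), ← map_mul, C_mul_X_mul_C]
    noncomm_ring
  have hH : H = 1 + C a₁ * X * K - C a₁ * X * (C q * K) :=
    calc H = 1 + C a₁ * X * C (1 - q) * C (a₂ * (1 - q)) * H := by
          rw [← hC, ← geomSeries_eq_one_add_mul]
      _ = 1 + C a₁ * X * (C (1 - q) * K) := by simp only [K, mul_assoc]
      _ = 1 + C a₁ * X * K - C a₁ * X * (C q * K) := by
          rw [map_sub, map_one]
          noncomm_ring
  have hR : R * (C a₁ * X * C a₂) = R - 1 := by
    rw [C_mul_X_mul_C, geomSeries_mul_eq_sub_one]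
  have hK : K = C a₂ * H - C a₂ * (C q * H) := by
    simp only [K, map_mul, map_sub, mul_sub, sub_mul, mul_one, mul_assoc]
  exact eq_sub_mul_sub_mul_of_resolvent hR hH hK

theorem mul_add_eq_of_linear_system {M N U c h k h' k' : 𝕜⟦X⟧}
    (hdet : M * M - U * N = M)
    (hMN : M * h + N * k = c * derivative 𝕜 (X * M))
    (hUM : U * h + M * k = c * derivative 𝕜 (X * U))
    (hMN' : M * h' + N * k' = c * (X * derivative 𝕜 N))
    (hUM' : U * h' + M * k' = c * (derivative 𝕜 (X * M) - M)) :
    M * (h + k') = c * derivative 𝕜 (X * M) := by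
  have hdet' := congrArg (derivative 𝕜) hdet
  simp only [map_sub, Derivation.leibniz, smul_eq_mul, derivative_X]
    at hdet' hMN hUM hUM' ⊢
  linear_combination M * hMN - N * hUM + M * hUM' - U * hMN' - (h + k') * hdet +
    c * hdet + c * X * hdet'

end Resolvent

section Compression

open PowerSeries
open Finset.HasAntidiagonal (antidiagonal)

variable {A : Subalgebra ℂ B} {φ ψ : B →ₗ[ℂ] ℂ} {q : B}

theorem sum_antidiagonal_left_comm {M : Type*} [AddCommMonoid M] (F : ℕ → ℕ → ℕ → M) (n : ℕ) :
    ∑ x ∈ antidiagonal n, ∑ y ∈ antidiagonal x.2, F x.1 y.1 y.2 =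
      ∑ x ∈ antidiagonal n, ∑ y ∈ antidiagonal x.2, F y.1 x.1 y.2 := by
  simp only [Finset.sum_sigma']
  apply Finset.sum_nbij' (fun x => ⟨(x.2.1, x.1.1 + x.2.2), (x.1.1, x.2.2)⟩)
    (fun x => ⟨(x.2.1, x.1.1 + x.2.2), (x.1.1, x.2.2)⟩) <;>
  simp <;> grind

theorem CyclicAntimonotone.mapCoeff_mul_mul
    (hcam : CyclicAntimonotone φ ψ (A : Set B) {x | ∃ c : ℂ, x = c • q}) (hq2 : q * q = q)
    {f g : B⟦X⟧} (hf : f ∈ coeffSubring A) (hg : g ∈ coeffSubring A) :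
    mapCoeff ψ (f * (C q * g)) = C (ψ q) * mapCoeff φ (f * g) := by
  ext n
  rw [coeff_mapCoeff, coeff_C_mul, coeff_mapCoeff, coeff_mul, coeff_mul, map_sum, map_sum,
    Finset.mul_sum]
  simp only [coeff_C_mul]
  exact Finset.sum_congr rfl fun _ _ => hcam.map_mul_mul hq2 (mem_coeffSubring.1 hf _)
    (mem_coeffSubring.1 hg _)

theorem CyclicAntimonotone.mapCoeff_mul_mul_mul_mul
    (hcam : CyclicAntimonotone φ ψ (A : Set B) {x | ∃ c : ℂ, x = c • q}) (hq2 : q * q = q)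
    {f g h : B⟦X⟧} (hf : f ∈ coeffSubring A) (hg : g ∈ coeffSubring A)
    (hh : h ∈ coeffSubring (Algebra.adjoin ℂ (insert q (A : Set B)))) :
    mapCoeff ψ (f * (C q * (g * (C q * h)))) = mapCoeff φ g * mapCoeff ψ (f * (C q * h)) := by
  ext n
  have coeff_mul_C_mul (f h : B⟦X⟧) (m : ℕ) :
      coeff m (f * (C q * h)) = ∑ x ∈ antidiagonal m, coeff x.1 f * (q * coeff x.2 h) := by
    simp only [coeff_mul m f, coeff_C_mul]
  simp only [coeff_mapCoeff, coeff_mul_C_mul, coeff_mul n (mapCoeff φ g), map_sum, Finset.mul_sum]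
  rw [← sum_antidiagonal_left_comm fun i j k =>
    φ (coeff j g) * ψ (coeff i f * (q * coeff k h))]
  exact Finset.sum_congr rfl fun _ _ => Finset.sum_congr rfl fun _ _ =>
    hcam.map_mul_mul_mul_mul hq2 (mem_coeffSubring.1 hf _) (mem_coeffSubring.1 hg _)
      (mem_coeffSubring.1 hh _)

theorem CyclicAntimonotone.mapCoeff_compression
    (hcam : CyclicAntimonotone φ ψ (A : Set B) {x | ∃ c : ℂ, x = c • q}) (hq2 : q * q = q)
    (hφ1 : φ 1 = 1) (hψA : ∀ a ∈ A, ψ a = 0) {a : B} (ha : a ∈ A) :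
    let M := mapCoeff φ (geomSeries a)
    M * mapCoeff ψ (C (1 - q) * geomSeries (a * (1 - q))) = -C (ψ q) * derivative ℂ (X * M) := by
  intro M
  set R := geomSeries a
  set G := geomSeries (a * (1 - q))
  have hR : R ∈ coeffSubring A := geomSeries_mem_coeffSubring ha
  have hGD : G ∈ coeffSubring (Algebra.adjoin ℂ (insert q (A : Set B))) :=
    geomSeries_mem_coeffSubring
      (mul_mem (le_adjoin_insert A q ha) (one_sub_mem_adjoin_insert A q))
  have hG : G = R - (R - 1) * (C q * G) :=
    eq_sub_mul_of_resolvent (geomSeries_mul_eq_sub_one a) (geomSeries_mul_one_sub_eq a q)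
  have hM : M * mapCoeff ψ (R * (C q * G)) = C (ψ q) * mapCoeff φ (R * R) := by
    have h : mapCoeff ψ (R * (C q * G)) =
        C (ψ q) * mapCoeff φ (R * R) - (M - 1) * mapCoeff ψ (R * (C q * G)) := by
      nth_rw 1 [hG]
      rw [mul_sub (C q), mul_sub R, map_sub, hcam.mapCoeff_mul_mul hq2 hR hR,
        hcam.mapCoeff_mul_mul_mul_mul hq2 hR (sub_mem hR (one_mem _)) hGD, map_sub,
        mapCoeff_one hφ1]
    linear_combination h
  have hRR : mapCoeff φ (R * R) = derivative ℂ (X * M) := by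
    simpa using mapCoeff_geomSeries_mul_self_mul_C φ a 1
  have hpG : C (1 - q) * G = R - R * (C q * G) := by
    rw [map_sub, map_one]
    linear_combination (norm := noncomm_ring) hG
  rw [hpG, map_sub, mapCoeff_eq_zero hψA hR, ← hRR]
  linear_combination -hM

theorem CyclicAntimonotone.mapCoeff_mul_mul_of_eq
    (hcam : CyclicAntimonotone φ ψ (A : Set B) {x | ∃ c : ℂ, x = c • q}) (hq2 : q * q = q)
    {f g r s t H K : B⟦X⟧} (hf : f ∈ coeffSubring A) (hr : r ∈ coeffSubring A)
    (hs : s ∈ coeffSubring A) (ht : t ∈ coeffSubring A)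
    (hH : H ∈ coeffSubring (Algebra.adjoin ℂ (insert q (A : Set B))))
    (hK : K ∈ coeffSubring (Algebra.adjoin ℂ (insert q (A : Set B))))
    (hg : g = r - s * (C q * H) - t * (C q * K)) :
    mapCoeff ψ (f * (C q * g)) = C (ψ q) * mapCoeff φ (f * r) -
      mapCoeff φ s * mapCoeff ψ (f * (C q * H)) - mapCoeff φ t * mapCoeff ψ (f * (C q * K)) := by
  rw [hg, mul_sub, mul_sub, mul_sub, mul_sub, map_sub, map_sub, hcam.mapCoeff_mul_mul hq2 hf hr,
    hcam.mapCoeff_mul_mul_mul_mul hq2 hf hs hH, hcam.mapCoeff_mul_mul_mul_mul hq2 hf ht hK]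

theorem CyclicAntimonotone.mapCoeff_alternating_linear_system
    (hcam : CyclicAntimonotone φ ψ (A : Set B) {x | ∃ c : ℂ, x = c • q}) (hq2 : q * q = q)
    (hφ1 : φ 1 = 1) {T : Subalgebra ℂ B} (hTA : T ≤ A)
    (htr : ∀ x ∈ T, ∀ y ∈ T, φ (x * y) = φ (y * x)) {a₁ a₂ : B} (ha₁ : a₁ ∈ T) (ha₂ : a₂ ∈ T)
    {f : B⟦X⟧} (hf : f ∈ coeffSubring T) :
    let R := geomSeries (a₁ * a₂)
    let H := geomSeries (a₁ * (1 - q) * a₂ * (1 - q))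
    let K := C (a₂ * (1 - q)) * H
    mapCoeff φ R * mapCoeff ψ (f * (C q * H)) +
          mapCoeff φ (R * (C a₁ * X)) * mapCoeff ψ (f * (C q * K)) =
        C (ψ q) * mapCoeff φ (f * R) ∧
      mapCoeff φ (R * C a₂) * mapCoeff ψ (f * (C q * H)) +
          mapCoeff φ R * mapCoeff ψ (f * (C q * K)) =
        C (ψ q) * mapCoeff φ (f * C a₂ * R) := by
  intro R H K
  set α : B⟦X⟧ := C a₁ * X
  set β : B⟦X⟧ := C a₂
  have hR : R ∈ coeffSubring T := geomSeries_mem_coeffSubring (mul_mem ha₁ ha₂)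
  have hα : α ∈ coeffSubring T := mul_mem (C_mem_coeffSubring ha₁) (X_mem_coeffSubring T)
  have hβ : β ∈ coeffSubring T := C_mem_coeffSubring ha₂
  have hH : H = R - (R - 1) * (C q * H) - R * α * (C q * K) :=
    geomSeries_alternating_eq_sub a₁ a₂ q
  have hK : K = β * R - β * R * (C q * H) - β * R * α * (C q * K) := by
    have hKH : K = β * H - β * (C q * H) := by
      simp only [K, β, map_mul, map_sub, mul_sub, sub_mul, mul_one, mul_assoc]
    linear_combination (norm := noncomm_ring) hKH + β * hH
  have hβRα : mapCoeff φ (β * R * α) = mapCoeff φ R - 1 := by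
    rw [mul_assoc, mapCoeff_mul_comm htr hβ (mul_mem hR hα), mul_assoc, C_mul_X_mul_C,
      geomSeries_mul_eq_sub_one, map_sub, mapCoeff_one hφ1]
  have hpD := one_sub_mem_adjoin_insert A q
  have hTD : T ≤ Algebra.adjoin ℂ (insert q (A : Set B)) := hTA.trans (le_adjoin_insert A q)
  have hHD : H ∈ coeffSubring (Algebra.adjoin ℂ (insert q (A : Set B))) :=
    geomSeries_mem_coeffSubring (mul_mem (mul_mem (mul_mem (hTD ha₁) hpD) (hTD ha₂)) hpD)
  have hKD : K ∈ coeffSubring (Algebra.adjoin ℂ (insert q (A : Set B))) :=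
    mul_mem (C_mem_coeffSubring (mul_mem (hTD ha₂) hpD)) hHD
  have hTA' := coeffSubring_mono hTA
  have hfH := hcam.mapCoeff_mul_mul_of_eq hq2 (hTA' hf) (hTA' hR)
    (hTA' (sub_mem hR (one_mem _))) (hTA' (mul_mem hR hα)) hHD hKD hH
  have hfK := hcam.mapCoeff_mul_mul_of_eq hq2 (hTA' hf) (hTA' (mul_mem hβ hR))
    (hTA' (mul_mem hβ hR)) (hTA' (mul_mem (mul_mem hβ hR) hα)) hHD hKD hK
  rw [map_sub, mapCoeff_one hφ1] at hfH
  rw [hβRα, mapCoeff_mul_comm htr hβ hR, ← mul_assoc f β R] at hfK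
  constructor
  · linear_combination hfH
  · linear_combination hfK

theorem CyclicAntimonotone.mapCoeff_alternating_compression
    (hcam : CyclicAntimonotone φ ψ (A : Set B) {x | ∃ c : ℂ, x = c • q}) (hq2 : q * q = q)
    (hφ1 : φ 1 = 1) (hψA : ∀ a ∈ A, ψ a = 0) {T : Subalgebra ℂ B} (hTA : T ≤ A)
    (htr : ∀ x ∈ T, ∀ y ∈ T, φ (x * y) = φ (y * x)) {a₁ a₂ : B} (ha₁ : a₁ ∈ T) (ha₂ : a₂ ∈ T) :
    let R := geomSeries (a₁ * a₂)
    let M := mapCoeff φ R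
    M * M - mapCoeff φ (R * C a₂) * mapCoeff φ (R * (C a₁ * X)) = M →
    M * mapCoeff ψ (C (1 - q) * geomSeries (a₁ * (1 - q) * a₂ * (1 - q))) =
      -C (ψ q) * derivative ℂ (X * M) := by
  intro R M hdet
  set H := geomSeries (a₁ * (1 - q) * a₂ * (1 - q))
  set K := C (a₂ * (1 - q)) * H
  have ha : a₁ * a₂ ∈ T := mul_mem ha₁ ha₂
  have hR : R ∈ coeffSubring T := geomSeries_mem_coeffSubring ha
  have hRα : R * (C a₁ * X) ∈ coeffSubring T :=
    mul_mem hR (mul_mem (C_mem_coeffSubring ha₁) (X_mem_coeffSubring T))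
  have hRR : mapCoeff φ (R * R) = derivative ℂ (X * M) := by
    simpa using mapCoeff_geomSeries_mul_self_mul_C φ (a₁ * a₂) 1
  have hRαβR : mapCoeff φ (R * (C a₁ * X) * C a₂ * R) = derivative ℂ (X * M) - M := by
    rw [mul_assoc R, C_mul_X_mul_C, geomSeries_mul_eq_sub_one, sub_one_mul, map_sub, hRR]
  obtain ⟨hRH, hRK⟩ :=
    hcam.mapCoeff_alternating_linear_system hq2 hφ1 hTA htr ha₁ ha₂ hR
  obtain ⟨hRαH, hRαK⟩ :=
    hcam.mapCoeff_alternating_linear_system hq2 hφ1 hTA htr ha₁ ha₂ hRα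
  rw [hRR] at hRH
  rw [mapCoeff_geomSeries_mul_mul_geomSeries htr ha ha₂] at hRK
  rw [mapCoeff_geomSeries_mul_mul_X_mul_geomSeries htr ha ha₁] at hRαH
  rw [hRαβR] at hRαK
  have hH : H = R - (R - 1) * (C q * H) - R * (C a₁ * X) * (C q * K) :=
    geomSeries_alternating_eq_sub a₁ a₂ q
  have hpH : C (1 - q) * H = R - R * (C q * H) - R * (C a₁ * X) * (C q * K) := by
    rw [map_sub, map_one]
    linear_combination (norm := noncomm_ring) hH
  rw [hpH, map_sub, map_sub, mapCoeff_eq_zero hψA (coeffSubring_mono hTA hR)]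
  linear_combination -mul_add_eq_of_linear_system hdet hRH hRK hRαH hRαK

theorem CyclicAntimonotone.map_compression_pow_eq
    (hcam : CyclicAntimonotone φ ψ (A : Set B) {x | ∃ c : ℂ, x = c • q}) (hq2 : q * q = q)
    (hφ1 : φ 1 = 1) (hψA : ∀ a ∈ A, ψ a = 0) {ι : Type*} {Alg : ι → Subalgebra ℂ B}
    (hAlgA : ∀ i, Alg i ≤ A) (hfree : IsFreeFamily φ fun i => (Alg i : Set B))
    (hcomm : ∀ i, ∀ x ∈ Alg i, ∀ y ∈ Alg i, φ (x * y) = φ (y * x)) {i j : ι} (hij : i ≠ j)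
    {a₁ a₂ : B} (ha₁ : a₁ ∈ Alg i) (ha₂ : a₂ ∈ Alg j) (n : ℕ) :
    ψ ((1 - q) * (a₁ * a₂ * (1 - q)) ^ n) =
      ψ ((1 - q) * (a₁ * (1 - q) * a₂ * (1 - q)) ^ n) := by
  set T := Algebra.adjoin ℂ (⋃ i, (Alg i : Set B))
  set M := mapCoeff φ (geomSeries (a₁ * a₂))
  have ha₁T : a₁ ∈ T := Algebra.subset_adjoin (Set.mem_iUnion_of_mem i ha₁)
  have ha₂T : a₂ ∈ T := Algebra.subset_adjoin (Set.mem_iUnion_of_mem j ha₂)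
  have hTA : T ≤ A := Algebra.adjoin_le (Set.iUnion_subset hAlgA)
  have htr : ∀ x ∈ T, ∀ y ∈ T, φ (x * y) = φ (y * x) :=
    fun x hx y hy => hfree.map_mul_comm hφ1 hcomm hx hy
  have hM : M ≠ 0 := by
    have hM0 : constantCoeff M = 1 := by
      rw [constantCoeff_mapCoeff, constantCoeff_geomSeries, hφ1]
    intro h
    simp [h] at hM0
  have hseries : mapCoeff ψ (C (1 - q) * geomSeries (a₁ * a₂ * (1 - q))) =
      mapCoeff ψ (C (1 - q) * geomSeries (a₁ * (1 - q) * a₂ * (1 - q))) :=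
    mul_left_cancel₀ hM <|
      (hcam.mapCoeff_compression hq2 hφ1 hψA (hTA (mul_mem ha₁T ha₂T))).trans
        (hcam.mapCoeff_alternating_compression hq2 hφ1 hψA hTA htr ha₁T ha₂T
          (hfree.mapCoeff_geomSeries_mul_self_sub_eq hφ1 hij ha₁ ha₂ ha₁T ha₂T htr)).symm
  simpa only [coeff_mapCoeff, coeff_C_mul, coeff_geomSeries] using congrArg (coeff n) hseries

end Compression

section TwoSidedIdeal

theorem mul_pow_eq_of_mul_eq {M : Type*} [Monoid M] {p x : M} (hx : x * p = x) {n : ℕ}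
    (hn : 0 < n) : (p * x) ^ n = p * x ^ n := by
  obtain ⟨n, rfl⟩ := Nat.exists_eq_succ_of_ne_zero hn.ne'
  rw [pow_succ, ← mul_assoc, mul_pow_mul, hx, mul_assoc, ← pow_succ]

variable {S : Type*} [Ring S]

theorem pow_sub_pow_mem {F : AddSubgroup S} (hFmulL : ∀ b : S, ∀ f ∈ F, b * f ∈ F)
    (hFmulR : ∀ b : S, ∀ f ∈ F, f * b ∈ F) {x y : S} (h : x - y ∈ F) (n : ℕ) :
    x ^ n - y ^ n ∈ F := by
  induction n with
  | zero => simp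
  | succ n ih =>
    have hsplit : x ^ (n + 1) - y ^ (n + 1) = x ^ n * (x - y) + (x ^ n - y ^ n) * y := by
      rw [pow_succ, pow_succ]
      noncomm_ring
    exact hsplit ▸ add_mem (hFmulL _ _ h) (hFmulR _ _ ih)

theorem altWord_mem {F : Set S} (hFmulL : ∀ b : S, ∀ f ∈ F, b * f ∈ F)
    (hFmulR : ∀ b : S, ∀ f ∈ F, f * b ∈ F) {n : ℕ} (hn : 0 < n) (a : Fin (n + 1) → S)
    {f : Fin n → S} (hf : ∀ k, f k ∈ F) : altWord a f ∈ F := by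
  obtain ⟨n, rfl⟩ := Nat.exists_eq_succ_of_ne_zero hn.ne'
  rw [altWord, List.ofFn_succ, List.prod_cons]
  exact hFmulL _ _ (hFmulR _ _ (hFmulR _ _ (hf 0)))

theorem CyclicAntimonotone.congr_right {F : Set S} (hFmulL : ∀ b : S, ∀ f ∈ F, b * f ∈ F)
    (hFmulR : ∀ b : S, ∀ f ∈ F, f * b ∈ F) {φ Φ Ψ : S → ℂ} {A₁ F₁ : Set S}
    (h : CyclicAntimonotone φ Φ A₁ F₁) (hF₁ : F₁ ⊆ F) (hΨ : ∀ f ∈ F, Ψ f = Φ f) :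
    CyclicAntimonotone φ Ψ A₁ F₁ := by
  intro n hn a f ha hf
  have hprod : (List.ofFn f).prod = altWord 1 f := by simp [altWord]
  have hfF (k) : f k ∈ F := hF₁ (hf k)
  rw [hΨ _ (altWord_mem hFmulL hFmulR hn a hfF), h n hn a f ha hf, hprod,
    hΨ _ (altWord_mem hFmulL hFmulR hn 1 hfF)]

end TwoSidedIdeal

theorem statement14_general
    {B : Type*} [Ring B] [Algebra ℂ B]
    (A : Subalgebra ℂ B) (F : Submodule ℂ B)
    (hFmulL : ∀ b : B, ∀ f ∈ F, b * f ∈ F)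
    (hFmulR : ∀ b : B, ∀ f ∈ F, f * b ∈ F)
    (φ Φ φ' : B →ₗ[ℂ] ℂ)
    (hφ1 : φ 1 = 1) (hφF : ∀ f ∈ F, φ f = 0)
    (hφ'A : ∀ a ∈ A, φ' a = 0) (hφ'F : ∀ f ∈ F, φ' f = Φ f)
    (q : B) (hqF : q ∈ F) (hq2 : q * q = q)
    (hcamq : CyclicAntimonotone ⇑φ ⇑Φ (A : Set B) {x | ∃ c : ℂ, x = c • q})
    (A₁ A₂ : Subalgebra ℂ B) (hA₁ : A₁ ≤ A) (hA₂ : A₂ ≤ A)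
    (hcomm₁ : ∀ x ∈ A₁, ∀ y ∈ A₁, φ (x * y) = φ (y * x))
    (hcomm₂ : ∀ x ∈ A₂, ∀ y ∈ A₂, φ (x * y) = φ (y * x))
    (hfree : IsFreeFamily ⇑φ (fun i : Bool => if i then (A₁ : Set B) else (A₂ : Set B)))
    (a₁ a₂ : B) (ha₁ : a₁ ∈ A₁) (ha₂ : a₂ ∈ A₂) :
    ∀ n : ℕ, 0 < n →
      φ (((1 - q) * (a₁ * a₂) * (1 - q)) ^ n) =
        φ (((1 - q) * a₁ * (1 - q) * a₂ * (1 - q)) ^ n) ∧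
      φ' (((1 - q) * (a₁ * a₂) * (1 - q)) ^ n) =
        φ' (((1 - q) * a₁ * (1 - q) * a₂ * (1 - q)) ^ n) := by
  intro n hn
  have hcam : CyclicAntimonotone φ φ' (A : Set B) {x | ∃ c : ℂ, x = c • q} :=
    hcamq.congr_right (F := F) hFmulL hFmulR (by rintro _ ⟨c, rfl⟩; exact F.smul_mem c hqF) hφ'F
  have hpp : (1 - q) * (1 - q) = 1 - q := IsIdempotentElem.one_sub hq2
  constructor
  · have hdiff : (1 - q) * (a₁ * a₂) * (1 - q) - (1 - q) * a₁ * (1 - q) * a₂ * (1 - q) =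
        (1 - q) * a₁ * (q * (a₂ * (1 - q))) := by noncomm_ring
    rw [← sub_eq_zero, ← map_sub]
    exact hφF _ (pow_sub_pow_mem (F := F.toAddSubgroup) hFmulL hFmulR
      (hdiff ▸ hFmulL _ _ (hFmulR _ _ hqF)) n)
  · have hpow {x : B} : ((1 - q) * (x * (1 - q))) ^ n = (1 - q) * (x * (1 - q)) ^ n :=
      mul_pow_eq_of_mul_eq (by rw [mul_assoc, hpp]) hn
    have hfree_family : IsFreeFamily φ fun i : Bool => ((if i then A₁ else A₂ :) : Set B) := by
      simpa only [apply_ite (SetLike.coe : Subalgebra ℂ B → Set B)] using hfree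
    simpa only [← hpow, ← mul_assoc] using
      hcam.map_compression_pow_eq hq2 hφ1 hφ'A (Bool.forall_bool.2 ⟨hA₂, hA₁⟩) hfree_family
        (Bool.forall_bool.2 ⟨hcomm₂, hcomm₁⟩) (i := true) (j := false) (by decide) ha₁ ha₂ n

theorem statement14
    {B : Type*} [Ring B] [Algebra ℂ B]
    (A : Subalgebra ℂ B) (F : Submodule ℂ B)
    (hFmulL : ∀ b : B, ∀ f ∈ F, b * f ∈ F)
    (hFmulR : ∀ b : B, ∀ f ∈ F, f * b ∈ F)
    (hAF : ∀ x ∈ A, x ∈ F → x = 0)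
    (hdec : ∀ x : B, ∃ a ∈ A, ∃ f ∈ F, x = a + f)
    (φ Φ φ' : B →ₗ[ℂ] ℂ)
    (hφ1 : φ 1 = 1) (hφF : ∀ f ∈ F, φ f = 0)
    (hφ'A : ∀ a ∈ A, φ' a = 0) (hφ'F : ∀ f ∈ F, φ' f = Φ f)
    (q : B) (hqF : q ∈ F) (hq2 : q * q = q) (hΦq : Φ q = 1)
    (hcamq : CyclicAntimonotone ⇑φ ⇑Φ (A : Set B) {x | ∃ c : ℂ, x = c • q})
    (a₁ a₂ : B) (ha₁ : a₁ ∈ A) (ha₂ : a₂ ∈ A)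
    (hfree : IsFreeFamily ⇑φ (fun i : Bool =>
      if i then (Algebra.adjoin ℂ {a₁} : Set B)
      else (Algebra.adjoin ℂ {a₂} : Set B))) :
    ∀ n : ℕ, 0 < n →
      φ (((1 - q) * (a₁ * a₂) * (1 - q)) ^ n) =
        φ (((1 - q) * a₁ * (1 - q) * a₂ * (1 - q)) ^ n) ∧
      φ' (((1 - q) * (a₁ * a₂) * (1 - q)) ^ n) =
        φ' (((1 - q) * a₁ * (1 - q) * a₂ * (1 - q)) ^ n) :=
  statement14_general A F hFmulL hFmulR φ Φ φ' hφ1 hφF hφ'A hφ'F q hqF hq2 hcamq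
    (Algebra.adjoin ℂ {a₁}) (Algebra.adjoin ℂ {a₂})
    (Algebra.adjoin_le (Set.singleton_subset_iff.2 ha₁))
    (Algebra.adjoin_le (Set.singleton_subset_iff.2 ha₂))
    (fun _ hx _ hy => by rw [setLike_mul_comm hx hy])
    (fun _ hx _ hy => by rw [setLike_mul_comm hx hy]) hfree a₁ a₂
    (Algebra.self_mem_adjoin_singleton ℂ a₁) (Algebra.self_mem_adjoin_singleton ℂ a₂)

end TypeBPrime
end

section
/- Let (B, φ, φ′) be an infinitesimal noncommutative probability space and let b₁, b₂ ∈ B be infinitesimally free. For i = 1, 2 set mᵢ(n) := φ(bᵢⁿ) (so mᵢ(0) = 1), let (tᵢ(n))_{n≥0} be the inverse Markov–Krein transform of (mᵢ(n))_{n≥0}, and assume φ′(bᵢⁿ) = mᵢ(n) − tᵢ(n) for all n ≥ 1. Set m(n) := φ((b₁ + b₂)ⁿ) and let (t(n))_{n≥0} be the inverse Markov–Krein transform of (m(n))_{n≥0}. Then φ′((b₁ + b₂)ⁿ) = m(n) − t(n) for all n ≥ 1. (This expresses the identity (μ₁, μ₁ − τ₁) ⊞ (μ₂, μ₂ − τ₂)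 = (μ, μ − τ) for the infinitesimal free additive convolution, where μ = μ₁ ⊞ μ₂ and τ, τᵢ are the inverse Markov–Krein transforms of μ, μᵢ.) -/
/-!
Let `K(w)` be the compositional inverse of the Cauchy transform `z ↦ φ((z - b)⁻¹)` and put
`h(w) = w K(w) = 1 + ∑ κₙ wⁿ`, with `κₙ` the free cumulants of `b`. Then `φ((h - w b)⁻¹) = 1`, and
the infinitesimal free cumulants are the coefficients of `(h - w h') φ'((h - w b)⁻¹)`. Substituting
the compositional inverse of `w ∑ φ(bⁿ) wⁿ` into the relation between moments and their inverse
Markov–Krein transform turns `φ'(bⁿ) = mₙ - tₙ` into `κ'ₙ = (1 - n) κₙ`. This condition is linear in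
the cumulants, hence stable under sums of infinitesimally free elements.

For the additivity of cumulants write `(hᵢ - w bᵢ)⁻¹ = 1 + aᵢ`, with `aᵢ` centered. The resolvent of
`b₁ + b₂` at `h₁ + h₂ - 1` is the sum of all alternating words in `a₁` and `a₂`. Under `φ` only the
empty word survives; under `φ'` only the words of odd length do, and peeling off their outer letters
gives a linear system for their values.
-/

open scoped BigOperators

namespace TypeBPrime

variable {B : Type*} [Ring B] [Algebra ℂ B]

open PowerSeries

section CoefficientwiseExtension

variable {R A : Type*} [CommSemiring R] [Semiring A] [Algebra R A]

/-- The coefficientwise extension of a linear functional to formal power series. -/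
noncomputable def coeffMap (l : A →ₗ[R] R) : A⟦X⟧ →ₗ[R] R⟦X⟧ where
  toFun f := PowerSeries.mk fun n => l (coeff n f)
  map_add' f g := by ext n; simp
  map_smul' c f := by ext n; simp

@[simp]
lemma coeff_coeffMap (l : A →ₗ[R] R) (f : A⟦X⟧) (n : ℕ) :
    coeff n (coeffMap l f) = l (coeff n f) := by
  simp [coeffMap]

lemma coeffMap_C (l : A →ₗ[R] R) (a : A) : coeffMap l (C a) = C (l a) := by
  ext n
  simp only [coeff_coeffMap, coeff_C]
  split_ifs <;> simp

lemma coeffMap_one (l : A →ₗ[R] R) : coeffMap l 1 = C (l 1) := by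
  rw [← map_one C, coeffMap_C]

lemma coeffMap_algebraMap_mul (l : A →ₗ[R] R) (y : R⟦X⟧) (f : A⟦X⟧) :
    coeffMap l (PowerSeries.map (algebraMap R A) y * f) = y * coeffMap l f := by
  ext n
  simp only [coeff_coeffMap, coeff_mul, map_sum, coeff_map]
  refine Finset.sum_congr rfl fun p _ => ?_
  rw [← Algebra.smul_def, map_smul, smul_eq_mul]

lemma coeffMap_eq_zero {l : A →ₗ[R] R} {f : A⟦X⟧} (hf : ∀ n, coeff n f ∈ LinearMap.ker l) :
    coeffMap l f = 0 := by
  ext n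
  simpa using hf n

lemma coeffMap_mul_mul {l l₁ l₂ : A →ₗ[R] R} {f g k : A⟦X⟧}
    (h : ∀ r s t, l (coeff r f * coeff s g * coeff t k) =
      l₁ (coeff r f * coeff t k) * l₂ (coeff s g)) :
    coeffMap l (f * g * k) = coeffMap l₁ (f * k) * coeffMap l₂ g := by
  ext n
  simp only [coeff_coeffMap, coeff_mul, map_sum, Finset.sum_mul, h]
  rw [Finset.sum_sigma', Finset.sum_sigma']
  refine Finset.sum_nbij' (fun x => ⟨(x.2.1 + x.1.2, x.2.2), (x.2.1, x.1.2)⟩)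
    (fun x => ⟨(x.2.1 + x.1.2, x.2.2), (x.2.1, x.1.2)⟩) ?_ ?_ ?_ ?_ ?_ <;>
  · rintro ⟨⟨p, q⟩, r, s⟩ hx
    simp_all [add_comm, add_left_comm]

lemma coeff_mul_mem_mul {M N : Submodule R A} {f g : A⟦X⟧} (hf : ∀ n, coeff n f ∈ M)
    (hg : ∀ n, coeff n g ∈ N) (n : ℕ) : coeff n (f * g) ∈ M * N := by
  rw [coeff_mul]
  exact Submodule.sum_mem _ fun p _ => Submodule.mul_mem_mul (hf _) (hg _)

lemma coeff_mem_of_eq_add_mul {M N : Submodule R A} (hMN : M * N ≤ N) {f g p : A⟦X⟧}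
    (hp : ∀ n, coeff n p ∈ M) (hp₀ : constantCoeff p = 0) (hg : ∀ n, coeff n g ∈ N)
    (hf : f = g + p * f) (n : ℕ) : coeff n f ∈ N := by
  induction n using Nat.strong_induction_on with
  | _ n ih =>
    rw [hf, map_add, coeff_mul]
    refine add_mem (hg n) (Submodule.sum_mem _ fun q hq => ?_)
    obtain hq₀ | hq₀ := Nat.eq_zero_or_pos q.1
    · simp [hq₀, hp₀]
    · have hq_add := Finset.HasAntidiagonal.mem_antidiagonal.1 hq
      exact hMN (Submodule.mul_mem_mul (hp _) (ih _ (by omega)))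

end CoefficientwiseExtension

section Substitution

variable {R : Type*} [CommRing R] {u : R⟦X⟧}

lemma subst_mk_eq_C_add_mul (hu : constantCoeff u = 0) (s : ℕ → R) :
    (PowerSeries.mk s).subst u = C (s 0) + u * (PowerSeries.mk fun n => s (n + 1)).subst u := by
  have hsubst := HasSubst.of_constantCoeff_zero' hu
  conv_lhs => rw [eq_X_mul_shift_add_const (PowerSeries.mk s)]
  rw [subst_add hsubst, subst_mul hsubst, subst_X hsubst, subst_C, add_comm]
  simp only [coeff_mk, ← coeff_zero_eq_constantCoeff_apply]
  rfl

lemma eq_subst_mk_of_forall_eq_C_add_mul (hu : constantCoeff u = 0) {s : ℕ → R} {F : ℕ → R⟦X⟧}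
    (hF : ∀ k, F k = C (s k) + u * F (k + 1)) : F 0 = (PowerSeries.mk s).subst u := by
  have X_pow_dvd_sub (n k : ℕ) :
      X ^ n ∣ F k - (PowerSeries.mk fun m => s (m + k)).subst u := by
    induction n generalizing k with
    | zero => simp
    | succ n ih =>
      have hshift := subst_mk_eq_C_add_mul hu fun m => s (m + k)
      simp only [zero_add, add_right_comm _ 1 k] at hshift
      rw [hF, hshift, add_sub_add_left_eq_sub, ← mul_sub, pow_succ']
      exact mul_dvd_mul (X_dvd_iff.2 hu) (ih (k + 1))
  ext n
  exact sub_eq_zero.1 <| (map_sub (coeff n) _ _).symm.trans <|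
    X_pow_dvd_iff.1 (X_pow_dvd_sub (n + 1) 0) n n.lt_succ_self

lemma subst_injective_of_isUnit_coeff_one (hu : constantCoeff u = 0) (hu₁ : IsUnit (coeff 1 u)) :
    Function.Injective (subst u : R⟦X⟧ → R⟦X⟧) := by
  refine Function.LeftInverse.injective (g := subst (u.substInvOfIsUnit hu₁)) fun f => ?_
  rw [subst_comp_subst_apply (HasSubst.of_constantCoeff_zero' hu)
    (HasSubst.substInvOfIsUnit u hu₁), subst_substInvOfIsUnit_right u hu hu₁, X_subst]

end Substitution

section FormalResolvent

variable {R A : Type*} [CommRing R] [Ring A] [Algebra R A]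

/-- The formal resolvent `(h - w b)⁻¹`, a power series in the variable `w = X`. In terms of
`z = h / w` it is `w⁻¹ (z - b)⁻¹`. It is only meaningful when `h` has constant coefficient `1`. -/
noncomputable def formalResolvent (b : A) (h : R⟦X⟧) : A⟦X⟧ :=
  invOfUnit (PowerSeries.map (algebraMap R A) h - X * C b) 1

variable {h : R⟦X⟧} (b : A)

lemma constantCoeff_map_algebraMap_sub_X_mul_C (hh : constantCoeff h = 1) :
    constantCoeff (PowerSeries.map (algebraMap R A) h - X * C b) = 1 := by
  rw [map_sub, ← coeff_zero_eq_constantCoeff_apply, coeff_map, coeff_zero_eq_constantCoeff_apply,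
    hh]
  simp

lemma mul_formalResolvent (hh : constantCoeff h = 1) :
    (PowerSeries.map (algebraMap R A) h - X * C b) * formalResolvent b h = 1 :=
  mul_invOfUnit _ _ (constantCoeff_map_algebraMap_sub_X_mul_C b hh)

lemma formalResolvent_mul (hh : constantCoeff h = 1) :
    formalResolvent b h * (PowerSeries.map (algebraMap R A) h - X * C b) = 1 :=
  invOfUnit_mul _ _ (constantCoeff_map_algebraMap_sub_X_mul_C b hh)

lemma constantCoeff_formalResolvent (h : R⟦X⟧) : constantCoeff (formalResolvent b h) = 1 := by
  simp [formalResolvent]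

lemma algebraMap_mul_formalResolvent (hh : constantCoeff h = 1) :
    PowerSeries.map (algebraMap R A) h * formalResolvent b h =
      1 + X * C b * formalResolvent b h := by
  rw [← mul_formalResolvent b hh, ← add_mul, sub_add_cancel]

variable {b}

lemma formalResolvent_eq_of_mul_eq_one (hh : constantCoeff h = 1) {f : A⟦X⟧}
    (hf : (PowerSeries.map (algebraMap R A) h - X * C b) * f = 1) : formalResolvent b h = f :=
  left_inv_eq_right_inv (formalResolvent_mul b hh) hf

lemma coeff_one_mem (S : Subalgebra R A) (n : ℕ) : coeff n (1 : A⟦X⟧) ∈ S := by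
  rw [coeff_one]
  split_ifs
  exacts [S.one_mem, S.zero_mem]

lemma coeff_formalResolvent_mem {S : Subalgebra R A} (hb : b ∈ S) (hh : constantCoeff h = 1)
    (n : ℕ) : coeff n (formalResolvent b h) ∈ S := by
  let p : A⟦X⟧ := 1 - (PowerSeries.map (algebraMap R A) h - X * C b)
  have coeff_X_mul_C_mem (k : ℕ) : coeff k (X * C b) ∈ S.toSubmodule := by
    cases k with
    | zero => simp
    | succ k =>
      rw [coeff_succ_X_mul, coeff_C]
      split_ifs
      exacts [hb, S.zero_mem]
  have coeff_p_mem (k : ℕ) : coeff k p ∈ S.toSubmodule := by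
    rw [map_sub, map_sub, coeff_map]
    exact sub_mem (coeff_one_mem S k) (sub_mem (S.algebraMap_mem _) (coeff_X_mul_C_mem k))
  refine coeff_mem_of_eq_add_mul (M := S.toSubmodule) (N := S.toSubmodule) (p := p)
    S.isIdempotentElem_toSubmodule.le coeff_p_mem ?_ (coeff_one_mem S) ?_ n
  · rw [map_sub, constantCoeff_map_algebraMap_sub_X_mul_C b hh, map_one, sub_self]
  · rw [sub_mul, mul_formalResolvent b hh, one_mul, add_sub_cancel]

end FormalResolvent

section MomentSeries

variable {R A : Type*} [CommRing R] [Ring A] [Algebra R A]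

/-- The moment generating series `∑ l(bⁿ) wⁿ` of `b` with respect to the functional `l`. -/
noncomputable def momentSeries (l : A →ₗ[R] R) (b : A) : R⟦X⟧ :=
  PowerSeries.mk fun n => l (b ^ n)

variable {h u : R⟦X⟧} (l : A →ₗ[R] R) (b : A)

lemma mul_coeffMap_pow_mul_formalResolvent_mul (hh : constantCoeff h = 1) (k : ℕ) (g : A⟦X⟧) :
    h * coeffMap l (C (b ^ k) * (formalResolvent b h * g)) =
      coeffMap l (C (b ^ k) * g) +
        X * coeffMap l (C (b ^ (k + 1)) * (formalResolvent b h * g)) := by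
  have hcomm : PowerSeries.map (algebraMap R A) h * C (b ^ k) =
      C (b ^ k) * PowerSeries.map (algebraMap R A) h := by
    ext n
    rw [coeff_mul_C, coeff_C_mul, coeff_map, Algebra.commutes]
  have hX (f : A⟦X⟧) : X * coeffMap l f = coeffMap l (X * f) := by
    rw [← coeffMap_algebraMap_mul, map_X]
  rw [← coeffMap_algebraMap_mul, ← mul_assoc, hcomm, mul_assoc, ← mul_assoc _ _ g,
    algebraMap_mul_formalResolvent b hh, hX, ← map_add, pow_succ, map_mul C, add_mul, one_mul,
    mul_add]
  congr 2
  rw [← mul_assoc X, ← mul_assoc X, ← (commute_X (C (b ^ k))).eq]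
  simp only [mul_assoc]

lemma mul_coeffMap_formalResolvent (hh : constantCoeff h = 1) (hu : u * h = X) :
    h * coeffMap l (formalResolvent b h) = (momentSeries l b).subst u := by
  have hu₀ : constantCoeff u = 0 := by simpa [hh] using congrArg constantCoeff hu
  have horner (k : ℕ) : h * coeffMap l (C (b ^ k) * formalResolvent b h) =
      C (l (b ^ k)) + u * (h * coeffMap l (C (b ^ (k + 1)) * formalResolvent b h)) := by
    have hk := mul_coeffMap_pow_mul_formalResolvent_mul l b hh k 1
    simp only [mul_one, coeffMap_C] at hk
    rw [hk, ← mul_assoc, hu]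
  simpa only [momentSeries, pow_zero, map_one, one_mul] using
    eq_subst_mk_of_forall_eq_C_add_mul hu₀ horner

lemma sq_mul_coeffMap_formalResolvent_sq (hh : constantCoeff h = 1) (hu : u * h = X) :
    h ^ 2 * coeffMap l (formalResolvent b h * formalResolvent b h) =
      (d⁄dX R (X * momentSeries l b)).subst u := by
  have hu₀ : constantCoeff u = 0 := by simpa [hh] using congrArg constantCoeff hu
  set U := formalResolvent b h
  have horner (k : ℕ) : h ^ 2 * coeffMap l (C (b ^ k) * (U * U)) +
        k * (h * coeffMap l (C (b ^ k) * U)) =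
      C ((k + 1) * l (b ^ k)) + u * (h ^ 2 * coeffMap l (C (b ^ (k + 1)) * (U * U)) +
        (k + 1 : ℕ) * (h * coeffMap l (C (b ^ (k + 1)) * U))) := by
    have hU := mul_coeffMap_pow_mul_formalResolvent_mul l b hh k 1
    have hUU := mul_coeffMap_pow_mul_formalResolvent_mul l b hh k U
    simp only [mul_one, coeffMap_C] at hU
    simp only [map_mul, map_add, map_natCast, map_one, Nat.cast_add, Nat.cast_one]
    linear_combination h * hUU + (k + 1) * hU -
      (h * coeffMap l (C (b ^ (k + 1)) * (U * U)) +
        (k + 1) * coeffMap l (C (b ^ (k + 1)) * U)) * hu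
  have hderiv : d⁄dX R (X * momentSeries l b) = PowerSeries.mk fun k => (k + 1) * l (b ^ k) := by
    ext k
    rw [coeff_derivative, coeff_succ_X_mul, momentSeries, coeff_mk, coeff_mk, mul_comm]
  rw [hderiv, ← eq_subst_mk_of_forall_eq_C_add_mul hu₀ horner]
  simp

end MomentSeries

section FreeCumulantSeries

variable {R A : Type*} [CommRing R] [Ring A] [Algebra R A]

/-- `h` is the free cumulant series `1 + ∑ κₙ wⁿ` of `b`, i.e. `h(w) = w K(w)` where `K` is the
compositional inverse of the Cauchy transform `z ↦ φ((z - b)⁻¹)`; the second condition is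
`φ((K(w) - b)⁻¹) = w`. -/
structure IsFreeCumulantSeries (φ : A →ₗ[R] R) (b : A) (h : R⟦X⟧) : Prop where
  constantCoeff_eq_one : constantCoeff h = 1
  coeffMap_formalResolvent_eq_one : coeffMap φ (formalResolvent b h) = 1

variable {φ : A →ₗ[R] R} {b : A}

lemma constantCoeff_momentSeries (φ : A →ₗ[R] R) (b : A) :
    constantCoeff (momentSeries φ b) = φ 1 := by
  simp [momentSeries, ← coeff_zero_eq_constantCoeff_apply]

lemma isUnit_of_constantCoeff_eq_one {f : R⟦X⟧} (hf : constantCoeff f = 1) : IsUnit f :=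
  isUnit_iff_constantCoeff.2 (hf ▸ isUnit_one)

lemma exists_isFreeCumulantSeries (hφ : φ 1 = 1) (b : A) :
    ∃ h, IsFreeCumulantSeries φ b h := by
  let M := momentSeries φ b
  have hM₀ : constantCoeff M = 1 := (constantCoeff_momentSeries φ b).trans hφ
  have hXM : constantCoeff (X * M) = 0 := by simp
  have hXM₁ : IsUnit (coeff 1 (X * M)) := by simp [coeff_succ_X_mul, hM₀]
  let u := (X * M).substInvOfIsUnit hXM₁
  have hsubst : HasSubst u := HasSubst.substInvOfIsUnit _ hXM₁
  have hu₀ : constantCoeff u = 0 := constantCoeff_substInvOfIsUnit _ hXM₁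
  have hu : u * M.subst u = X := by
    have hright := subst_substInvOfIsUnit_right (X * M) hXM hXM₁
    rwa [subst_mul hsubst, subst_X hsubst] at hright
  have hh : constantCoeff (M.subst u) = 1 := by
    rw [show M = PowerSeries.mk fun n => φ (b ^ n) from rfl, subst_mk_eq_C_add_mul hu₀]
    simp [hu₀, hφ]
  refine ⟨M.subst u, hh, (isUnit_of_constantCoeff_eq_one hh).mul_left_cancel ?_⟩
  rw [mul_coeffMap_formalResolvent φ b hh hu, mul_one]

namespace IsFreeCumulantSeries

variable {h u : R⟦X⟧} (H : IsFreeCumulantSeries φ b h)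
include H

lemma isUnit : IsUnit h := isUnit_of_constantCoeff_eq_one H.constantCoeff_eq_one

lemma map_one_eq_one : φ 1 = 1 := by
  have hcoeff := congrArg (coeff 0) H.coeffMap_formalResolvent_eq_one
  rwa [coeff_coeffMap, coeff_zero_eq_constantCoeff_apply, constantCoeff_formalResolvent,
    coeff_zero_one] at hcoeff

lemma constantCoeff_sub_X_mul_derivative : constantCoeff (h - X * d⁄dX R h) = 1 := by
  simp [H.constantCoeff_eq_one]

lemma subst_momentSeries (hu : u * h = X) : (momentSeries φ b).subst u = h := by
  rw [← mul_coeffMap_formalResolvent φ b H.constantCoeff_eq_one hu,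
    H.coeffMap_formalResolvent_eq_one, mul_one]

lemma subst_derivative_X_mul_momentSeries (hu : u * h = X) :
    (d⁄dX R (X * momentSeries φ b)).subst u * (h - X * d⁄dX R h) = h ^ 2 := by
  have hu₀ : constantCoeff u = 0 := by
    simpa [H.constantCoeff_eq_one] using congrArg constantCoeff hu
  have hsubst := HasSubst.of_constantCoeff_zero' hu₀
  have hchain : (d⁄dX R (X * momentSeries φ b)).subst u * d⁄dX R u = 1 := by
    rw [← derivative_subst hsubst, subst_mul hsubst, subst_X hsubst, H.subst_momentSeries hu, hu]
    simp
  have hu_deriv : u * d⁄dX R h + h * d⁄dX R u = 1 := by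
    simpa using congrArg (d⁄dX R) hu
  linear_combination h ^ 2 * hchain - h * (d⁄dX R (X * momentSeries φ b)).subst u * hu_deriv
    + (d⁄dX R (X * momentSeries φ b)).subst u * d⁄dX R h * hu

lemma coeffMap_formalResolvent_sq_mul :
    coeffMap φ (formalResolvent b h * formalResolvent b h) * (h - X * d⁄dX R h) = 1 := by
  obtain ⟨k, hk⟩ := H.isUnit.exists_left_inv
  have hu : X * k * h = X := by rw [mul_assoc, hk, mul_one]
  refine (H.isUnit.pow 2).mul_left_cancel ?_
  rw [← mul_assoc, sq_mul_coeffMap_formalResolvent_sq φ b H.constantCoeff_eq_one hu,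
    H.subst_derivative_X_mul_momentSeries hu, mul_one]

lemma coeffMap_formalResolvent_sub_one_sq :
    coeffMap φ ((formalResolvent b h - 1) * (formalResolvent b h - 1)) =
      coeffMap φ (formalResolvent b h * formalResolvent b h) - 1 := by
  have hsq (U : A⟦X⟧) : (U - 1) * (U - 1) = U * U - U - U + 1 := by noncomm_ring
  rw [hsq, map_add, map_sub, map_sub, H.coeffMap_formalResolvent_eq_one, coeffMap_one,
    H.map_one_eq_one, map_one, sub_add_cancel]

end IsFreeCumulantSeries

/-- The infinitesimal free cumulant series of `b`, where `h` is its free cumulant series: it is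
`w r(w)` for the infinitesimal R-transform `r(w) = -K'(w) φ'((K(w) - b)⁻¹)`, `K(w) = h(w) / w`. -/
noncomputable def infCumulantSeries (φ' : A →ₗ[R] R) (b : A) (h : R⟦X⟧) : R⟦X⟧ :=
  (h - X * d⁄dX R h) * coeffMap φ' (formalResolvent b h)

end FreeCumulantSeries

section InverseMarkovKrein

variable {φ φ' : B →ₗ[ℂ] ℂ} {b : B} {h u : ℂ⟦X⟧} {t : ℕ → ℂ}

lemma IsInvMK.mk_mul_momentSeries (ht : IsInvMK (fun n => φ (b ^ n)) t) :
    PowerSeries.mk t * momentSeries φ b = d⁄dX ℂ (X * momentSeries φ b) := by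
  ext n
  rw [coeff_derivative, coeff_succ_X_mul, momentSeries, coeff_mk, mul_comm _ ((n : ℂ) + 1), ht n,
    coeff_mul, Finset.Nat.sum_antidiagonal_eq_sum_range_succ_mk]
  simp only [coeff_mk]

lemma IsInvMK.zero_eq_one (hφ : φ 1 = 1) (ht : IsInvMK (fun n => φ (b ^ n)) t) : t 0 = 1 := by
  simpa [hφ] using (ht 0).symm

namespace IsFreeCumulantSeries

variable (H : IsFreeCumulantSeries φ b h)
include H

lemma subst_mk_mul_of_isInvMK (hu : u * h = X) (ht : IsInvMK (fun n => φ (b ^ n)) t) :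
    (PowerSeries.mk t).subst u * (h - X * d⁄dX ℂ h) = h := by
  have hsubst : HasSubst u := HasSubst.of_constantCoeff_zero' <| by
    simpa [H.constantCoeff_eq_one] using congrArg constantCoeff hu
  refine H.isUnit.mul_left_cancel ?_
  calc h * ((PowerSeries.mk t).subst u * (h - X * d⁄dX ℂ h))
      = (PowerSeries.mk t * momentSeries φ b).subst u * (h - X * d⁄dX ℂ h) := by
        rw [subst_mul hsubst, H.subst_momentSeries hu]
        ring
    _ = h * h := by
        rw [ht.mk_mul_momentSeries, H.subst_derivative_X_mul_momentSeries hu, sq]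

lemma infCumulantSeries_eq_iff (hφ' : φ' 1 = 0) (ht : IsInvMK (fun n => φ (b ^ n)) t) :
    infCumulantSeries φ' b h = h - X * d⁄dX ℂ h - 1 ↔
      ∀ n : ℕ, 0 < n → φ' (b ^ n) = φ (b ^ n) - t n := by
  obtain ⟨k, hk⟩ := H.isUnit.exists_left_inv
  have hu : X * k * h = X := by rw [mul_assoc, hk, mul_one]
  have hu₀ : constantCoeff (X * k) = 0 := by simp
  have hu₁ : IsUnit (coeff 1 (X * k)) := by
    rw [coeff_succ_X_mul, coeff_zero_eq_constantCoeff_apply]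
    exact (IsUnit.of_mul_eq_one h hk).map constantCoeff
  have hsubst : HasSubst (X * k) := HasSubst.of_constantCoeff_zero' hu₀
  have hmoments : (∀ n : ℕ, 0 < n → φ' (b ^ n) = φ (b ^ n) - t n) ↔
      momentSeries φ' b + PowerSeries.mk t = momentSeries φ b := by
    simp only [PowerSeries.ext_iff, map_add, momentSeries, coeff_mk, eq_sub_iff_add_eq]
    refine ⟨fun hn n => ?_, fun hn n _ => hn n⟩
    obtain rfl | hpos := Nat.eq_zero_or_pos n
    · simp [hφ', H.map_one_eq_one, ht.zero_eq_one H.map_one_eq_one]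
    · exact hn n hpos
  have hsubstituted : momentSeries φ' b + PowerSeries.mk t = momentSeries φ b ↔
      h * coeffMap φ' (formalResolvent b h) + (PowerSeries.mk t).subst (X * k) = h := by
    rw [← (subst_injective_of_isUnit_coeff_one hu₀ hu₁).eq_iff, subst_add hsubst,
      H.subst_momentSeries hu, ← mul_coeffMap_formalResolvent φ' b H.constantCoeff_eq_one hu]
  have hΔ := isUnit_of_constantCoeff_eq_one H.constantCoeff_sub_X_mul_derivative
  have hT := H.subst_mk_mul_of_isInvMK hu ht
  rw [hmoments, hsubstituted, infCumulantSeries]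
  constructor <;> intro heq
  · refine hΔ.mul_right_cancel ?_
    linear_combination h * heq + hT
  · refine H.isUnit.mul_left_cancel ?_
    linear_combination (h - X * d⁄dX ℂ h) * heq - hT

end IsFreeCumulantSeries

end InverseMarkovKrein

section AlternatingProducts

variable {ι R A : Type*} [CommSemiring R] [Semiring A] [Algebra R A]

/-- The alternating sequence `x, y, x, y, …`. -/
def alternate (x y : ι) (k : ℕ) : ι := if Even k then x else y

lemma alternate_zero (x y : ι) : alternate x y 0 = x := rfl

lemma alternate_succ (x y : ι) (k : ℕ) : alternate x y (k + 1) = alternate y x k := by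
  simp only [alternate, Nat.even_add_one]
  split_ifs <;> rfl

lemma alternate_ne_succ {x y : ι} (hxy : x ≠ y) (k : ℕ) :
    alternate x y k ≠ alternate x y (k + 1) := by
  rw [alternate_succ, alternate, alternate]
  split_ifs
  exacts [hxy, hxy.symm]

lemma alternate_rev (x y : ι) {m : ℕ} (k : Fin (2 * m + 1)) :
    alternate x y k = alternate x y k.rev := by
  have hk : Even (k : ℕ) ↔ Even (k.rev : ℕ) := by
    rw [Fin.val_rev, Nat.even_iff, Nat.even_iff]
    omega
  simp only [alternate, hk]

lemma prod_ofFn_cons_snoc {n : ℕ} (a : A) (b : Fin n → A) (c : A) :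
    (List.ofFn (Fin.cons a (Fin.snoc (α := fun _ => A) b c) : Fin (n + 2) → A)).prod =
      a * (List.ofFn b).prod * c := by
  rw [List.ofFn_succ, List.prod_cons, List.ofFn_succ', List.prod_concat, mul_assoc]
  simp only [Fin.cons_zero, Fin.cons_succ, Fin.snoc_castSucc, Fin.snoc_last]

lemma forall_cons_snoc_mem_alternate {M : ι → Submodule R A} {i j : ι} {a c : A} (ha : a ∈ M i)
    {m : ℕ} {b : Fin (2 * m + 1) → A} (hb : ∀ k : Fin (2 * m + 1), b k ∈ M (alternate j i k))
    (hc : c ∈ M i) (k : Fin (2 * m + 1 + 2)) :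
    (Fin.cons a (Fin.snoc (α := fun _ => A) b c) : Fin (2 * m + 1 + 2) → A) k ∈
      M (alternate i j k) := by
  refine Fin.cases ha (fun k => ?_) k
  rw [Fin.cons_succ, Fin.val_succ, alternate_succ]
  refine Fin.lastCases ?_ (fun k => ?_) k
  · simpa [alternate, Nat.even_add_one] using hc
  · simpa using hb k

lemma prod_ofFn_le {n : ℕ} {M : Fin n → Submodule R A} {N : Submodule R A}
    (h : ∀ b : Fin n → A, (∀ k, b k ∈ M k) → (List.ofFn b).prod ∈ N) :
    (List.ofFn M).prod ≤ N := by
  induction n generalizing N with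
  | zero =>
    rw [List.ofFn_zero, List.prod_nil, Submodule.one_le]
    simpa using h Fin.elim0 (fun k => k.elim0)
  | succ n ih =>
    rw [List.ofFn_succ, List.prod_cons, Submodule.mul_le]
    intro a ha x hx
    refine ih (N := N.comap (LinearMap.mulLeft R a)) (fun b hb => ?_) hx
    simpa using h (Fin.cons a b) (Fin.cases ha hb)

/-- The span of the alternating products `a₁ a₂ ⋯ aₙ` of length `n` with `a₁ ∈ M i`, `a₂ ∈ M j`,
`a₃ ∈ M i`, …. -/
def altProd (M : ι → Submodule R A) (i j : ι) (n : ℕ) : Submodule R A :=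
  (List.ofFn fun k : Fin n => M (alternate i j k)).prod

/-- The span of the alternating products of odd length with first and last factor in `M i` and
the remaining factors alternately in `M j` and `M i`. -/
def oddProds (M : ι → Submodule R A) (i j : ι) : Submodule R A :=
  ⨆ n, altProd M i j (2 * n + 1)

variable {M : ι → Submodule R A} (i j : ι)

lemma altProd_succ (n : ℕ) : altProd M i j (n + 1) = M i * altProd M j i n := by
  simp only [altProd, List.ofFn_succ, List.prod_cons, Fin.val_zero, Fin.val_succ, alternate_zero,
    alternate_succ]

lemma le_oddProds : M i ≤ oddProds M i j := by
  refine le_of_eq_of_le ?_ (le_iSup (fun n => altProd M i j (2 * n + 1)) 0)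
  simp [altProd, alternate]

lemma mul_mul_oddProds_le : M i * M j * oddProds M i j ≤ oddProds M i j := by
  rw [oddProds, Submodule.mul_iSup, iSup_le_iff]
  intro n
  rw [mul_assoc, ← altProd_succ, ← altProd_succ]
  exact le_iSup (fun n => altProd M i j (2 * n + 1)) (n + 1)

lemma mul_oddProds : M i * oddProds M j i = ⨆ n, altProd M i j (2 * n + 2) := by
  simp only [oddProds, Submodule.mul_iSup, ← altProd_succ]

end AlternatingProducts

section InfinitesimalFreeness

variable {ι : Type*} {φ φ' : B →ₗ[ℂ] ℂ} {S : ι → Subalgebra ℂ B} {i j : ι}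

/-- The centered elements of the subalgebras `S i`. -/
def centered (φ : B →ₗ[ℂ] ℂ) (S : ι → Subalgebra ℂ B) (i : ι) : Submodule ℂ B :=
  (S i).toSubmodule ⊓ LinearMap.ker φ

lemma IsFreeFamily.altProd_le_ker (hfree : IsFreeFamily φ fun i => (S i : Set B)) (hij : i ≠ j)
    (n : ℕ) : altProd (centered φ S) i j (n + 1) ≤ LinearMap.ker φ :=
  prod_ofFn_le fun b hb => hfree n (fun k => alternate i j k) b
    (fun k => alternate_ne_succ hij k) (fun k => (hb k).1) (fun k => (hb k).2)

lemma IsFreeFamily.oddProds_le_ker (hfree : IsFreeFamily φ fun i => (S i : Set B)) (hij : i ≠ j) :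
    oddProds (centered φ S) i j ≤ LinearMap.ker φ :=
  iSup_le fun n => hfree.altProd_le_ker hij (2 * n)

lemma IsFreeFamily.mul_oddProds_le_ker (hfree : IsFreeFamily φ fun i => (S i : Set B))
    (hij : i ≠ j) : centered φ S i * oddProds (centered φ S) j i ≤ LinearMap.ker φ := by
  rw [mul_oddProds]
  exact iSup_le fun n => hfree.altProd_le_ker hij (2 * n + 1)

namespace IsInfFree

variable (hinf : IsInfFree φ φ' fun i => (S i : Set B)) (hij : i ≠ j)
include hinf hij

lemma mul_oddProds_le_ker : centered φ S i * oddProds (centered φ S) j i ≤ LinearMap.ker φ' := by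
  rw [mul_oddProds]
  refine iSup_le fun n => prod_ofFn_le fun b hb => ?_
  refine hinf.2.1 (2 * n + 1) (fun k => alternate i j k) b (fun k => alternate_ne_succ hij k)
    (fun k => (hb k).1) (fun k => (hb k).2) fun hsymm => ?_
  exact Nat.not_even_bit1 n hsymm.1

lemma map_mul_prod_ofFn_mul {a c : B} (ha : a ∈ centered φ S i) (hc : c ∈ centered φ S i) {m : ℕ}
    {b : Fin (2 * m + 1) → B} (hb : ∀ k : Fin (2 * m + 1), b k ∈ centered φ S (alternate j i k)) :
    φ' (a * (List.ofFn b).prod * c) = φ (a * c) * φ' (List.ofFn b).prod := by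
  let w : Fin (2 * m + 1 + 2) → B := Fin.cons a (Fin.snoc (α := fun _ => B) b c)
  have w_last : w (Fin.last (2 * m + 1)).succ = c := by
    simp only [w, Fin.cons_succ, Fin.snoc_last]
  have w_inner (k : Fin (2 * m + 1)) : w k.castSucc.succ = b k := by
    simp only [w, Fin.cons_succ, Fin.snoc_castSucc]
  have hw : ∀ k : Fin (2 * m + 1 + 2), w k ∈ centered φ S (alternate i j k) :=
    forall_cons_snoc_mem_alternate ha hb hc
  have hword := hinf.2.2 (m + 1) (fun k => alternate i j k) w (fun k => alternate_ne_succ hij k)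
    (fun k => (hw k).1) (fun k => (hw k).2) (alternate_rev i j)
  have hinner := hinf.2.2 m (fun k => alternate j i k) b (fun k => alternate_ne_succ hij.symm k)
    (fun k => (hb k).1) (fun k => (hb k).2) (alternate_rev j i)
  rw [← prod_ofFn_cons_snoc, hinner, ← mul_assoc]
  refine hword.trans ?_
  rw [Fin.prod_univ_succ]
  congr 2
  · exact congrArg (fun x => φ (a * x)) w_last
  · refine Finset.prod_congr rfl fun k _ => ?_
    rw [← w_inner, ← w_inner]
    congr 3
    ext
    simp [Fin.val_rev]
    omega
  · exact w_inner ⟨m, by omega⟩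

lemma map_mul_mul {a c y : B} (ha : a ∈ centered φ S i) (hc : c ∈ centered φ S i)
    (hy : y ∈ oddProds (centered φ S) j i) : φ' (a * y * c) = φ (a * c) * φ' y := by
  let l : B →ₗ[ℂ] ℂ := φ' ∘ₗ LinearMap.mulRight ℂ c ∘ₗ LinearMap.mulLeft ℂ a - φ (a * c) • φ'
  suffices oddProds (centered φ S) j i ≤ LinearMap.ker l from sub_eq_zero.1 (this hy)
  exact iSup_le fun n => prod_ofFn_le fun b hb =>
    sub_eq_zero.2 (hinf.map_mul_prod_ofFn_mul hij ha hc hb)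

end IsInfFree

end InfinitesimalFreeness

section OddSeries

variable {R A ι : Type*} [CommRing R] [Ring A] [Algebra R A]

/-- The series `a + a b a + a b a b a + ⋯ = (1 - a b)⁻¹ a`. It is only meaningful when `a b` has
constant coefficient `0`. -/
noncomputable def oddSeries (a b : A⟦X⟧) : A⟦X⟧ := invOfUnit (1 - a * b) 1 * a

variable {a b : A⟦X⟧} (ha : constantCoeff a = 0)
include ha

lemma oddSeries_eq_add_mul : oddSeries a b = a + a * b * oddSeries a b := by
  have hinv : (1 - a * b) * invOfUnit (1 - a * b) 1 = 1 := mul_invOfUnit _ _ (by simp [ha])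
  have hodd : (1 - a * b) * oddSeries a b = a := by rw [oddSeries, ← mul_assoc, hinv, one_mul]
  rwa [sub_mul, one_mul, sub_eq_iff_eq_add] at hodd

lemma mul_oddSeries : b * oddSeries a b = oddSeries b a * a := by
  have hinv : invOfUnit (1 - b * a) 1 * (1 - b * a) = 1 := invOfUnit_mul _ _ (by simp [ha])
  have hpush : (1 - b * a) * (b * oddSeries a b) = b * a := by
    calc (1 - b * a) * (b * oddSeries a b) = b * (oddSeries a b - a * b * oddSeries a b) := by
          noncomm_ring
      _ = b * a := by rw [sub_eq_of_eq_add (oddSeries_eq_add_mul ha)]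
  calc b * oddSeries a b
      = invOfUnit (1 - b * a) 1 * ((1 - b * a) * (b * oddSeries a b)) := by
        rw [← mul_assoc, hinv, one_mul]
    _ = oddSeries b a * a := by rw [hpush, oddSeries, mul_assoc]

lemma oddSeries_eq_add_mul_mul : oddSeries a b = a + a * oddSeries b a * a := by
  conv_lhs => rw [oddSeries_eq_add_mul ha, mul_assoc, mul_oddSeries ha, ← mul_assoc]

lemma coeff_oddSeries_mem_oddProds {M : ι → Submodule R A} {i j : ι} (haM : ∀ n, coeff n a ∈ M i)
    (hbM : ∀ n, coeff n b ∈ M j) (n : ℕ) : coeff n (oddSeries a b) ∈ oddProds M i j :=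
  coeff_mem_of_eq_add_mul (mul_mul_oddProds_le i j) (coeff_mul_mem_mul haM hbM) (by simp [ha])
    (fun k => le_oddProds i j (haM k)) (oddSeries_eq_add_mul ha) n

end OddSeries

section ResolventOfSum

variable {R A : Type*} [CommRing R] [Ring A] [Algebra R A]

lemma add_sub_one_mul_eq_one {x y p q v w : A} (hv : v * (1 + x) = 1) (hw : w * (1 + y) = 1)
    (hp : p = x + x * y * p) (hq : q = y + y * x * q) :
    (v + w - 1) * (1 + p + q + x * q + y * p) = 1 := by
  set s := 1 + p + q + x * q + y * p with hs
  have hvs : v * s = 1 + q + y * p := by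
    have hfactor : s = (1 + x) * (1 + q + y * p) := by
      rw [hs]
      nth_rw 1 [hp]
      noncomm_ring
    rw [hfactor, ← mul_assoc, hv, one_mul]
  have hws : w * s = 1 + p + x * q := by
    have hfactor : s = (1 + y) * (1 + p + x * q) := by
      rw [hs]
      nth_rw 1 [hq]
      noncomm_ring
    rw [hfactor, ← mul_assoc, hw, one_mul]
  rw [sub_mul, add_mul, hvs, hws, hs]
  noncomm_ring

variable {b₁ b₂ : A} {h₁ h₂ : R⟦X⟧}

lemma formalResolvent_add (hh₁ : constantCoeff h₁ = 1) (hh₂ : constantCoeff h₂ = 1) :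
    let a₁ := formalResolvent b₁ h₁ - 1
    let a₂ := formalResolvent b₂ h₂ - 1
    formalResolvent (b₁ + b₂) (h₁ + h₂ - 1) =
      1 + oddSeries a₁ a₂ + oddSeries a₂ a₁ + a₁ * oddSeries a₂ a₁ + a₂ * oddSeries a₁ a₂ := by
  intro a₁ a₂
  have hh : constantCoeff (h₁ + h₂ - 1) = 1 := by simp [hh₁, hh₂]
  have hsum : PowerSeries.map (algebraMap R A) (h₁ + h₂ - 1) - X * C (b₁ + b₂) =
      (PowerSeries.map (algebraMap R A) h₁ - X * C b₁) +
        (PowerSeries.map (algebraMap R A) h₂ - X * C b₂) - 1 := by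
    simp only [map_add, map_sub, map_one, mul_add]
    abel
  refine formalResolvent_eq_of_mul_eq_one hh ?_
  rw [hsum]
  refine add_sub_one_mul_eq_one ?_ ?_ (oddSeries_eq_add_mul ?_) (oddSeries_eq_add_mul ?_)
  · rw [add_sub_cancel, mul_formalResolvent b₁ hh₁]
  · rw [add_sub_cancel, mul_formalResolvent b₂ hh₂]
  · simp [a₁, constantCoeff_formalResolvent]
  · simp [a₂, constantCoeff_formalResolvent]

end ResolventOfSum

section Additivity

variable {ι : Type*} {φ φ' : B →ₗ[ℂ] ℂ} {S : ι → Subalgebra ℂ B} {i j : ι} {b b₁ b₂ : B}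
  {h h₁ h₂ : ℂ⟦X⟧}

lemma IsFreeCumulantSeries.coeff_formalResolvent_sub_one_mem (H : IsFreeCumulantSeries φ b h)
    (hb : b ∈ S i) (n : ℕ) : coeff n (formalResolvent b h - 1) ∈ centered φ S i := by
  refine ⟨?_, LinearMap.mem_ker.2 ?_⟩
  · rw [map_sub]
    exact sub_mem (coeff_formalResolvent_mem hb H.constantCoeff_eq_one n) (coeff_one_mem (S i) n)
  · rw [← coeff_coeffMap, map_sub, H.coeffMap_formalResolvent_eq_one,
      coeffMap_one, H.map_one_eq_one, map_one, sub_self, map_zero]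

lemma IsFreeCumulantSeries.coeff_oddSeries_mem_oddProds_centered (H₁ : IsFreeCumulantSeries φ b₁ h₁)
    (H₂ : IsFreeCumulantSeries φ b₂ h₂) (hb₁ : b₁ ∈ S i) (hb₂ : b₂ ∈ S j) (n : ℕ) :
    coeff n (oddSeries (formalResolvent b₁ h₁ - 1) (formalResolvent b₂ h₂ - 1)) ∈
      oddProds (centered φ S) i j :=
  coeff_oddSeries_mem_oddProds (by simp [constantCoeff_formalResolvent])
    (H₁.coeff_formalResolvent_sub_one_mem hb₁) (H₂.coeff_formalResolvent_sub_one_mem hb₂) n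

lemma IsFreeFamily.isFreeCumulantSeries_add (hfree : IsFreeFamily φ fun i => (S i : Set B))
    (hij : i ≠ j) (hb₁ : b₁ ∈ S i) (hb₂ : b₂ ∈ S j) (H₁ : IsFreeCumulantSeries φ b₁ h₁)
    (H₂ : IsFreeCumulantSeries φ b₂ h₂) : IsFreeCumulantSeries φ (b₁ + b₂) (h₁ + h₂ - 1) := by
  have hO₁ := H₁.coeff_oddSeries_mem_oddProds_centered H₂ hb₁ hb₂
  have hO₂ := H₂.coeff_oddSeries_mem_oddProds_centered H₁ hb₂ hb₁
  have ha₁ := H₁.coeff_formalResolvent_sub_one_mem hb₁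
  have ha₂ := H₂.coeff_formalResolvent_sub_one_mem hb₂
  refine ⟨by simp [H₁.constantCoeff_eq_one, H₂.constantCoeff_eq_one], ?_⟩
  rw [formalResolvent_add H₁.constantCoeff_eq_one H₂.constantCoeff_eq_one, map_add, map_add,
    map_add, map_add, coeffMap_one, H₁.map_one_eq_one, map_one,
    coeffMap_eq_zero fun n => hfree.oddProds_le_ker hij (hO₁ n),
    coeffMap_eq_zero fun n => hfree.oddProds_le_ker hij.symm (hO₂ n),
    coeffMap_eq_zero fun n => hfree.mul_oddProds_le_ker hij (coeff_mul_mem_mul ha₁ hO₂ n),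
    coeffMap_eq_zero fun n => hfree.mul_oddProds_le_ker hij.symm (coeff_mul_mem_mul ha₂ hO₁ n)]
  simp only [add_zero]

namespace IsInfFree

variable (hinf : IsInfFree φ φ' fun i => (S i : Set B)) (hij : i ≠ j) (hφ' : φ' 1 = 0)
  (hb₁ : b₁ ∈ S i) (hb₂ : b₂ ∈ S j) (H₁ : IsFreeCumulantSeries φ b₁ h₁)
  (H₂ : IsFreeCumulantSeries φ b₂ h₂)
include hinf hij hφ' hb₁ hb₂ H₁ H₂

lemma coeffMap_oddSeries :
    let a₁ := formalResolvent b₁ h₁ - 1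
    let a₂ := formalResolvent b₂ h₂ - 1
    coeffMap φ' (oddSeries a₁ a₂) = coeffMap φ' (formalResolvent b₁ h₁) +
      (coeffMap φ (formalResolvent b₁ h₁ * formalResolvent b₁ h₁) - 1) *
        coeffMap φ' (oddSeries a₂ a₁) := by
  intro a₁ a₂
  have ha₁ : constantCoeff a₁ = 0 := by simp [a₁, constantCoeff_formalResolvent]
  have ha₁_mem := H₁.coeff_formalResolvent_sub_one_mem hb₁
  rw [oddSeries_eq_add_mul_mul ha₁, map_add, map_sub, coeffMap_one, hφ', map_zero, sub_zero,
    coeffMap_mul_mul (l₁ := φ) (l₂ := φ') fun r s t => hinf.map_mul_mul hij (ha₁_mem r) (ha₁_mem t)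
      (H₂.coeff_oddSeries_mem_oddProds_centered H₁ hb₂ hb₁ s),
    H₁.coeffMap_formalResolvent_sub_one_sq]

lemma coeffMap_formalResolvent_add :
    let a₁ := formalResolvent b₁ h₁ - 1
    let a₂ := formalResolvent b₂ h₂ - 1
    coeffMap φ' (formalResolvent (b₁ + b₂) (h₁ + h₂ - 1)) =
      coeffMap φ' (oddSeries a₁ a₂) + coeffMap φ' (oddSeries a₂ a₁) := by
  have hO₁ := H₁.coeff_oddSeries_mem_oddProds_centered H₂ hb₁ hb₂
  have hO₂ := H₂.coeff_oddSeries_mem_oddProds_centered H₁ hb₂ hb₁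
  have ha₁ := H₁.coeff_formalResolvent_sub_one_mem hb₁
  have ha₂ := H₂.coeff_formalResolvent_sub_one_mem hb₂
  rw [formalResolvent_add H₁.constantCoeff_eq_one H₂.constantCoeff_eq_one, map_add, map_add,
    map_add, map_add, coeffMap_one, hφ', map_zero, zero_add,
    coeffMap_eq_zero fun n => hinf.mul_oddProds_le_ker hij (coeff_mul_mem_mul ha₁ hO₂ n),
    coeffMap_eq_zero fun n => hinf.mul_oddProds_le_ker hij.symm (coeff_mul_mem_mul ha₂ hO₁ n),
    add_zero, add_zero]

lemma infCumulantSeries_add :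
    infCumulantSeries φ' (b₁ + b₂) (h₁ + h₂ - 1) =
      infCumulantSeries φ' b₁ h₁ + infCumulantSeries φ' b₂ h₂ := by
  have ho₁ := hinf.coeffMap_oddSeries hij hφ' hb₁ hb₂ H₁ H₂
  have ho₂ := hinf.coeffMap_oddSeries hij.symm hφ' hb₂ hb₁ H₂ H₁
  have hq₁ := H₁.coeffMap_formalResolvent_sq_mul
  have hq₂ := H₂.coeffMap_formalResolvent_sq_mul
  simp only [infCumulantSeries, hinf.coeffMap_formalResolvent_add hij hφ' hb₁ hb₂ H₁ H₂, map_add,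
    map_sub, Derivation.map_one_eq_zero]
  linear_combination (h₁ - X * d⁄dX ℂ h₁) * ho₁ + (h₂ - X * d⁄dX ℂ h₂) * ho₂ +
    coeffMap φ' (oddSeries (formalResolvent b₂ h₂ - 1) (formalResolvent b₁ h₁ - 1)) * hq₁ +
    coeffMap φ' (oddSeries (formalResolvent b₁ h₁ - 1) (formalResolvent b₂ h₂ - 1)) * hq₂

end IsInfFree

end Additivity

theorem statement15
    {B : Type*} [Ring B] [Algebra ℂ B]
    (φ φ' : B →ₗ[ℂ] ℂ) (hφ1 : φ 1 = 1) (hφ'1 : φ' 1 = 0)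
    (b₁ b₂ : B)
    (hinf : IsInfFree ⇑φ ⇑φ' (fun i : Bool =>
      if i then (Algebra.adjoin ℂ {b₁} : Set B)
      else (Algebra.adjoin ℂ {b₂} : Set B)))
    (t₁ t₂ t : ℕ → ℂ)
    (ht₁ : IsInvMK (fun n => φ (b₁ ^ n)) t₁)
    (ht₂ : IsInvMK (fun n => φ (b₂ ^ n)) t₂)
    (hb₁ : ∀ n : ℕ, 0 < n → φ' (b₁ ^ n) = φ (b₁ ^ n) - t₁ n)
    (hb₂ : ∀ n : ℕ, 0 < n → φ' (b₂ ^ n) = φ (b₂ ^ n) - t₂ n)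
    (ht : IsInvMK (fun n => φ ((b₁ + b₂) ^ n)) t) :
    ∀ n : ℕ, 0 < n → φ' ((b₁ + b₂) ^ n) = φ ((b₁ + b₂) ^ n) - t n := by
  obtain ⟨h₁, H₁⟩ := exists_isFreeCumulantSeries hφ1 b₁
  obtain ⟨h₂, H₂⟩ := exists_isFreeCumulantSeries hφ1 b₂
  let S : Bool → Subalgebra ℂ B :=
    fun i => bif i then Algebra.adjoin ℂ {b₁} else Algebra.adjoin ℂ {b₂}
  have hS : IsInfFree φ φ' fun i => (S i : Set B) := by
    convert hinf with i
    cases i <;> rfl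
  have hb₁S : b₁ ∈ S true := Algebra.self_mem_adjoin_singleton ℂ b₁
  have hb₂S : b₂ ∈ S false := Algebra.self_mem_adjoin_singleton ℂ b₂
  have hne : true ≠ false := nofun
  have H := hS.1.isFreeCumulantSeries_add hne hb₁S hb₂S H₁ H₂
  have hadd := hS.infCumulantSeries_add hne hφ'1 hb₁S hb₂S H₁ H₂
  rw [(H₁.infCumulantSeries_eq_iff hφ'1 ht₁).2 hb₁, (H₂.infCumulantSeries_eq_iff hφ'1 ht₂).2 hb₂]
    at hadd
  refine (H.infCumulantSeries_eq_iff hφ'1 ht).1 (hadd.trans ?_)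
  simp only [map_add, map_sub, Derivation.map_one_eq_zero]
  ring

end TypeBPrime
end

section
/- Let (B, φ, φ′) be an infinitesimal noncommutative probability space and let b₁, b₂ ∈ B be infinitesimally free. For i = 1, 2 set mᵢ(n) := φ(bᵢⁿ) (so mᵢ(0) = 1), let (tᵢ(n))_{n≥0} be the inverse Markov–Krein transform of (mᵢ(n))_{n≥0}, and assume φ′(bᵢⁿ) = mᵢ(n) − tᵢ(n) for all n ≥ 1. Set m(n) := φ((b₁ b₂)ⁿ) and let (t(n))_{n≥0} be the inverse Markov–Krein transform of (m(n))_{n≥0}. Then φ′((b₁ b₂)ⁿ) = m(n) − t(n) for all n ≥ 1. (This expresses the identity (μ₁, μ₁ − τ₁) ⊠ (μ₂, μ₂ − τ₂) = (μ, μ − τ) for the infinitesimal free multiplicative convolution, where μ = μ₁ ⊠ μ₂ and τ, τᵢ are the inverse Markov–Krein transforms of μ, μᵢ.) -/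
open scoped BigOperators

namespace TypeBPrime

variable {B : Type*} [Ring B] [Algebra ℂ B]

/-!
Let `M` and `D` be the generating series of `φ(aⁿ)` and `φ'(aⁿ)`, and write `M = 1 / (1 - z f)`, so
that `f` is the Boolean cumulant series of `a`. Then `φ'(aⁿ) = m(n) - t(n)` for all `n` means
`(1 - z f) D = -z² f'`, and it suffices to derive this condition for `b₁ b₂` from those for `b₁` and
`b₂`.

Let `g₁ = f₁(z g₂)` and `g₂ = f₂(z g₁)`. The resolvents `x = (1 - z g₂ b₁)⁻¹ (b₁ - g₁)` and
`y = (1 - z g₁ b₂)⁻¹ (b₂ - g₂)` are centered, and with `K = (1 - z x y)⁻¹`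
`(1 - z g₁ g₂) (1 - z b₁ b₂)⁻¹ = (1 + z g₁ y) K (1 + z g₂ x)`.
Freeness makes `φ` of the right side equal to `1`, so the product has Boolean cumulant series
`g₁ g₂`. Only palindromic words contribute to `φ'`, whence
`φ'(y K) = φ'(y) + z φ(y²) φ'(K x)` and `φ'(K x) = φ'(x) + z φ(x²) φ'(y K)`.
The Markov–Krein conditions on `b₁` and `b₂` give the solution `φ'(y K) = -z g₂'`,
`φ'(K x) = -z g₁'`, so `φ'` of the right side is `-z² (g₁ g₂)'`, which is the Markov–Krein condition
on `b₁ b₂`.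
-/
open PowerSeries
open scoped Polynomial
open Finset.HasAntidiagonal (antidiagonal mem_antidiagonal)

section ScalarSeries

variable {R A : Type*} [CommRing R] [Ring A] [Algebra R A]

/-- Scalar series act on series over a noncommutative algebra; Mathlib's instance needs `A`
commutative. -/
noncomputable instance (priority := low) seriesAlgebra : Algebra R⟦X⟧ A⟦X⟧ :=
  (map (algebraMap R A)).toAlgebra' fun f u => by
    ext n
    rw [coeff_mul, coeff_mul, ← Finset.Nat.sum_antidiagonal_swap]
    simp only [coeff_map, Prod.fst_swap, Prod.snd_swap, Algebra.commutes]

theorem series_smul_def (f : R⟦X⟧) (u : A⟦X⟧) : f • u = map (algebraMap R A) f * u := rfl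

theorem coeff_series_smul (n : ℕ) (f : R⟦X⟧) (u : A⟦X⟧) :
    coeff n (f • u) = ∑ p ∈ antidiagonal n, coeff p.1 f • coeff p.2 u := by
  rw [series_smul_def, coeff_mul]
  simp only [coeff_map, Algebra.smul_def]

/-- The coefficientwise extension of a linear functional to power series. -/
noncomputable def coeffwise (ψ : A →ₗ[R] R) : A⟦X⟧ →ₗ[R⟦X⟧] R⟦X⟧ where
  toFun u := mk fun n => ψ (coeff n u)
  map_add' u v := by ext n; simp only [coeff_mk, map_add]
  map_smul' f u := by
    ext n
    simp only [coeff_mk, coeff_series_smul, map_sum, map_smul, smul_eq_mul, RingHom.id_apply,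
      coeff_mul]

theorem coeff_coeffwise (ψ : A →ₗ[R] R) (n : ℕ) (u : A⟦X⟧) :
    coeff n (coeffwise ψ u) = ψ (coeff n u) :=
  coeff_mk n fun k => ψ (coeff k u)

theorem constantCoeff_coeffwise (ψ : A →ₗ[R] R) (u : A⟦X⟧) :
    constantCoeff (coeffwise ψ u) = ψ (constantCoeff u) := by
  simp only [← coeff_zero_eq_constantCoeff_apply, coeff_coeffwise]

theorem coeffwise_one (ψ : A →ₗ[R] R) : coeffwise ψ (1 : A⟦X⟧) = C (ψ 1) := by
  ext n
  simp only [coeff_coeffwise, coeff_one, coeff_C, apply_ite ψ, map_zero]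

/-- The generating series `∑ aⁿ Xⁿ` of the powers of `a`. -/
noncomputable def powers (a : A) : A⟦X⟧ := mk (a ^ ·)

theorem coeff_powers (n : ℕ) (a : A) : coeff n (powers a) = a ^ n := coeff_mk n _

theorem X_smul (u : A⟦X⟧) : (X : R⟦X⟧) • u = X * u := by
  rw [series_smul_def, map_X]

theorem constantCoeff_powers (a : A) : constantCoeff (powers a) = 1 := by
  rw [← coeff_zero_eq_constantCoeff_apply, coeff_powers, pow_zero]

variable (R) in
theorem one_sub_mul_powers (a : A) : (1 - (X : R⟦X⟧) • C a) * powers a = 1 := by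
  ext (_ | n)
  · simp [X_smul, constantCoeff_powers]
  · simp [X_smul, sub_mul, mul_assoc, coeff_succ_X_mul, coeff_powers, coeff_one, pow_succ']

variable (R) in
theorem powers_mul_one_sub (a : A) : powers a * (1 - (X : R⟦X⟧) • C a) = 1 := by
  ext (_ | n)
  · simp [X_smul, constantCoeff_powers]
  · simp [X_smul, mul_sub, ← mul_assoc, coeff_powers, coeff_one, pow_succ]

theorem coeffwise_powers_mul_powers (ψ : A →ₗ[R] R) (a : A) :
    coeffwise ψ (powers a * powers a) = d⁄dX R (X * coeffwise ψ (powers a)) := by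
  ext n
  have hpow : ∀ p ∈ antidiagonal n, a ^ p.1 * a ^ p.2 = a ^ n := fun p hp => by
    rw [← pow_add, mem_antidiagonal.mp hp]
  rw [coeff_coeffwise, coeff_mul, coeff_derivative, coeff_succ_X_mul, coeff_coeffwise]
  simp only [coeff_powers]
  rw [Finset.sum_congr rfl hpow, Finset.sum_const, Finset.Nat.card_antidiagonal, map_nsmul,
    nsmul_eq_mul, mul_comm, Nat.cast_succ]

end ScalarSeries

section MarkovKrein

section ScalarIdentities

variable {R : Type*} [CommRing R]

theorem exists_one_sub_X_mul_mul_eq_one {M : R⟦X⟧} (hM : constantCoeff M = 1) :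
    ∃ f : R⟦X⟧, (1 - X * f) * M = 1 := by
  obtain ⟨f, hf⟩ : X ∣ 1 - invOfUnit M 1 := by
    rw [X_dvd_iff, map_sub, map_one, constantCoeff_invOfUnit, inv_one, Units.val_one, sub_self]
  exact ⟨f, by rw [← hf, sub_sub_cancel, invOfUnit_mul M 1 hM]⟩

theorem sq_mul_derivative_X_mul {f M : R⟦X⟧} (hM : (1 - X * f) * M = 1) :
    (1 - X * f) ^ 2 * d⁄dX R (X * M) = 1 + X ^ 2 * d⁄dX R f := by
  have hderiv : (1 - X * f) * d⁄dX R M = (f + X * d⁄dX R f) * M := by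
    have h := congrArg (d⁄dX R) hM
    simp only [Derivation.leibniz, map_sub, derivative_X, Derivation.map_one_eq_zero,
      smul_eq_mul] at h
    linear_combination h
  rw [Derivation.leibniz, derivative_X, smul_eq_mul, smul_eq_mul]
  linear_combination (1 - X * f) * X * hderiv + (1 - X * f + X * (f + X * d⁄dX R f)) * hM

theorem eq_sub_iff_mul_eq_neg_sq_mul_derivative {f M T D : R⟦X⟧} (hM : (1 - X * f) * M = 1)
    (hT : d⁄dX R (X * M) = T * M) :
    D = M - T ↔ (1 - X * f) * D = -(X ^ 2 * d⁄dX R f) := by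
  have hsT : (1 - X * f) * (M - T) = -(X ^ 2 * d⁄dX R f) := by
    linear_combination (1 + (1 - X * f) * T) * hM + (1 - X * f) ^ 2 * hT -
      sq_mul_derivative_X_mul hM
  rw [← hsT, (IsUnit.of_mul_eq_one M hM).mul_right_inj]

end ScalarIdentities

variable {R A : Type*} [CommRing R] [Ring A] [Algebra R A]

/-- The Markov–Krein condition `D = M - T` on the moment series `M = ∑ φ(aⁿ) Xⁿ` and
`D = ∑ φ'(aⁿ) Xⁿ` of `a`, where `T` is the inverse Markov–Krein transform of `M`, expressed through
the Boolean cumulant series `f` of `a`, defined by `M = 1 / (1 - X f)`. -/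
structure IsMarkovKrein (φ φ' : A →ₗ[R] R) (a : A) (f : R⟦X⟧) : Prop where
  moment : (1 - X * f) * coeffwise φ (powers a) = 1
  infinitesimal : (1 - X * f) * coeffwise φ' (powers a) = -(X ^ 2 * d⁄dX R f)

namespace IsMarkovKrein

variable {φ φ' : A →ₗ[R] R} {a : A} {f : R⟦X⟧}

theorem map_one (h : IsMarkovKrein φ φ' a f) : φ 1 = 1 := by
  simpa [constantCoeff_coeffwise, constantCoeff_powers] using congrArg constantCoeff h.moment

theorem infinitesimal_map_one (h : IsMarkovKrein φ φ' a f) : φ' 1 = 0 := by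
  simpa [constantCoeff_coeffwise, constantCoeff_powers] using congrArg constantCoeff h.infinitesimal

theorem coeffwise_one (h : IsMarkovKrein φ φ' a f) : coeffwise φ (1 : A⟦X⟧) = 1 := by
  rw [TypeBPrime.coeffwise_one, h.map_one, _root_.map_one C]

theorem infinitesimal_coeffwise_one (h : IsMarkovKrein φ φ' a f) :
    coeffwise φ' (1 : A⟦X⟧) = 0 := by
  rw [TypeBPrime.coeffwise_one, h.infinitesimal_map_one, map_zero C]

end IsMarkovKrein

section InverseTransform

variable {φ φ' : B →ₗ[ℂ] ℂ} {b : B} {t : ℕ → ℂ}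

theorem IsInvMK.derivative_X_mul (ht : IsInvMK (fun n => φ (b ^ n)) t) :
    d⁄dX ℂ (X * coeffwise φ (powers b)) = mk t * coeffwise φ (powers b) := by
  ext n
  rw [coeff_derivative, coeff_succ_X_mul, coeff_mul, coeff_coeffwise, coeff_powers, mul_comm, ht n,
    Finset.Nat.sum_antidiagonal_eq_sum_range_succ_mk]
  simp only [coeff_mk, coeff_coeffwise, coeff_powers]

theorem IsMarkovKrein.infinitesimal_pow {f : ℂ⟦X⟧} (h : IsMarkovKrein φ φ' b f)
    (ht : IsInvMK (fun n => φ (b ^ n)) t) (n : ℕ) : φ' (b ^ n) = φ (b ^ n) - t n := by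
  have hD := (eq_sub_iff_mul_eq_neg_sq_mul_derivative h.moment ht.derivative_X_mul).2
    h.infinitesimal
  simpa [coeff_coeffwise, coeff_powers] using congrArg (coeff n) hD

theorem IsInvMK.exists_isMarkovKrein (hφ : φ 1 = 1) (hφ' : φ' 1 = 0)
    (ht : IsInvMK (fun n => φ (b ^ n)) t)
    (hb : ∀ n, 0 < n → φ' (b ^ n) = φ (b ^ n) - t n) : ∃ f, IsMarkovKrein φ φ' b f := by
  have hM : constantCoeff (coeffwise φ (powers b)) = 1 := by
    rw [constantCoeff_coeffwise, constantCoeff_powers, hφ]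
  have ht0 : t 0 = 1 := by simpa [hφ] using (ht 0).symm
  have hD : coeffwise φ' (powers b) = coeffwise φ (powers b) - mk t := by
    ext (_ | n)
    · simp [coeff_coeffwise, coeff_powers, hM, hφ', ht0]
    · simp [coeff_coeffwise, coeff_powers, hb (n + 1) n.succ_pos]
  obtain ⟨f, hf⟩ := exists_one_sub_X_mul_mul_eq_one hM
  exact ⟨f, hf, (eq_sub_iff_mul_eq_neg_sq_mul_derivative hf ht.derivative_X_mul).1 hD⟩

end InverseTransform

end MarkovKrein

section CenteredResolvent

variable {R A : Type*} [CommRing R] [Ring A] [Algebra R A]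

/-- `x` is the resolvent `(1 - w a)⁻¹ (a - g)` of `a` at the series `w`, centered for `φ`, with the
values of `φ` and `φ'` that the Markov–Krein condition on `a` forces. -/
structure IsCenteredResolvent (φ φ' : A →ₗ[R] R) (a : A) (w g : R⟦X⟧) (x : A⟦X⟧) : Prop where
  mul_one_sub : x * (1 - w • C a) = C a - g • (1 : A⟦X⟧)
  centered : coeffwise φ x = 0
  derivative : d⁄dX R g = coeffwise φ (x * x) * d⁄dX R w
  infinitesimal : coeffwise φ' x = -(w * coeffwise φ (x * x))

theorem X_smul_sub_mul_powers (a : A) (f : R⟦X⟧) :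
    (X : R⟦X⟧) • ((C a - f • (1 : A⟦X⟧)) * powers a) = (1 - X * f) • powers a - 1 := by
  have h : (X : R⟦X⟧) • (C a * powers a) = powers a - 1 := by
    rw [← smul_mul_assoc, ← one_sub_mul_powers R a, sub_mul, one_mul, sub_sub_cancel]
  rw [sub_mul, smul_mul_assoc, one_mul, smul_sub, h, smul_smul, sub_smul, one_smul]
  abel

namespace IsMarkovKrein

variable {φ φ' : A →ₗ[R] R} {a : A} {f : R⟦X⟧}

theorem coeffwise_resolvent_sq (h : IsMarkovKrein φ φ' a f) {x : A⟦X⟧}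
    (hx : (X : R⟦X⟧) • x = (1 - X * f) • powers a - 1) : coeffwise φ (x * x) = d⁄dX R f := by
  refine X_pow_mul_cancel (k := 2) ?_
  have hexpand : (X ^ 2 : R⟦X⟧) • (x * x) =
      (1 - X * f) ^ 2 • (powers a * powers a) - (2 * (1 - X * f)) • powers a + 1 := by
    rw [pow_two, ← smul_mul_smul_comm, hx, sub_mul, mul_sub, smul_mul_smul_comm, mul_one, one_mul,
      pow_two, two_mul, add_smul]
    abel
  rw [← smul_eq_mul, ← map_smul, hexpand, map_add, map_sub, map_smul, map_smul,
    coeffwise_powers_mul_powers, h.coeffwise_one, smul_eq_mul, smul_eq_mul]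
  linear_combination sq_mul_derivative_X_mul h.moment - 2 * h.moment

theorem isCenteredResolvent (h : IsMarkovKrein φ φ' a f) :
    IsCenteredResolvent φ φ' a X f ((C a - f • (1 : A⟦X⟧)) * powers a) := by
  have hX := X_smul_sub_mul_powers a f
  have hsq := h.coeffwise_resolvent_sq hX
  refine ⟨?_, X_mul_cancel ?_, ?_, X_mul_cancel ?_⟩
  · rw [mul_assoc, powers_mul_one_sub, mul_one]
  · rw [← smul_eq_mul, ← map_smul, hX, map_sub, map_smul, h.coeffwise_one, smul_eq_mul, h.moment,
      sub_self, mul_zero]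
  · rw [hsq, derivative_X, mul_one]
  · rw [← smul_eq_mul, ← map_smul, hX, map_sub, map_smul, h.infinitesimal_coeffwise_one,
      smul_eq_mul, h.infinitesimal, hsq]
    ring

end IsMarkovKrein

end CenteredResolvent

section Substitution

variable {R A : Type*} [CommRing R] [Ring A] [Algebra R A] {a : A} {w : R⟦X⟧}

theorem hasSubst_map_C (hw : constantCoeff w = 0) : HasSubst (map (Polynomial.C (R := R)) w) :=
  HasSubst.of_constantCoeff_zero' (by rw [← coeff_zero_eq_constantCoeff_apply, coeff_map,
    coeff_zero_eq_constantCoeff_apply, hw, map_zero])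

/-- Substitution of a scalar series `w` for the variable of a series whose coefficients are
polynomials in `a`. It passes through `R[X]` because substitution in Mathlib needs commutative
coefficients. -/
noncomputable def evalSubst (a : A) (hw : constantCoeff w = 0) : R[X]⟦X⟧ →+* A⟦X⟧ :=
  (map (Polynomial.aeval a).toRingHom).comp
    (RingHomClass.toRingHom (substAlgHom (R := R[X]) (hasSubst_map_C hw)))

/-- The distribution of `a` under `ψ`, as a functional on polynomials. -/
noncomputable def law (ψ : A →ₗ[R] R) (a : A) : R[X] →ₗ[R] R :=
  ψ ∘ₗ (Polynomial.aeval a).toLinearMap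

theorem law_apply (ψ : A →ₗ[R] R) (p : R[X]) : law ψ a p = ψ (Polynomial.aeval a p) := rfl

variable (hw : constantCoeff w = 0)

theorem coeff_evalSubst (n : ℕ) (u : R[X]⟦X⟧) :
    coeff n (evalSubst a hw u) =
      Polynomial.aeval a (coeff n (u.subst (map (Polynomial.C (R := R)) w))) := by
  rw [evalSubst, RingHom.comp_apply, coeff_map, RingHom.coe_coe, coe_substAlgHom]
  rfl

theorem coeff_evalSubst_mem (n : ℕ) (u : R[X]⟦X⟧) :
    coeff n (evalSubst a hw u) ∈ Algebra.adjoin R {a} := by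
  rw [coeff_evalSubst]
  exact Polynomial.aeval_mem_adjoin_singleton R a

theorem evalSubst_C_X : evalSubst a hw (C Polynomial.X) = C a := by
  have hC : (C (Polynomial.X : R[X])).subst (map (Polynomial.C (R := R)) w) = C Polynomial.X :=
    subst_C _
  ext n
  rw [coeff_evalSubst, hC, coeff_C, coeff_C, apply_ite (Polynomial.aeval a), Polynomial.aeval_X,
    map_zero]

theorem evalSubst_smul (f : R⟦X⟧) (u : R[X]⟦X⟧) :
    evalSubst a hw (f • u) = f.subst w • evalSubst a hw u := by
  have hf : evalSubst a hw (map Polynomial.C f) = map (algebraMap R A) (f.subst w) := by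
    ext n
    have hmap : map Polynomial.C (f.subst w) =
        (map Polynomial.C f).subst (map (Polynomial.C (R := R)) w) :=
      map_subst (HasSubst.of_constantCoeff_zero' hw) f
    rw [coeff_evalSubst, ← hmap, coeff_map, coeff_map, Polynomial.aeval_C]
  rw [series_smul_def, series_smul_def, map_mul, ← hf]
  rfl

theorem coeffwise_evalSubst (ψ : A →ₗ[R] R) (u : R[X]⟦X⟧) :
    coeffwise ψ (evalSubst a hw u) = (coeffwise (law ψ a) u).subst w := by
  have hsubst := hasSubst_map_C hw
  ext n
  rw [coeff_coeffwise, coeff_evalSubst, coeff_subst' hsubst,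
    coeff_subst' (HasSubst.of_constantCoeff_zero' hw), ← law_apply,
    ← LinearMap.toAddMonoidHom_coe, AddMonoidHom.map_finsum _ (coeff_subst_finite' hsubst u n)]
  refine finsum_congr fun d => ?_
  rw [coeff_coeffwise, ← map_pow, coeff_map, smul_eq_mul, smul_eq_mul, mul_comm,
    ← Polynomial.smul_eq_C_mul, LinearMap.toAddMonoidHom_coe, map_smul, smul_eq_mul, mul_comm]

theorem IsMarkovKrein.polynomial_X {φ φ' : A →ₗ[R] R} {f : R⟦X⟧} (h : IsMarkovKrein φ φ' a f) :
    IsMarkovKrein (law φ a) (law φ' a) Polynomial.X f := by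
  have hpow (ψ : A →ₗ[R] R) :
      coeffwise (law ψ a) (powers Polynomial.X) = coeffwise ψ (powers a) := by
    ext n
    simp [coeff_coeffwise, coeff_powers, law_apply]
  exact ⟨by rw [hpow, h.moment], by rw [hpow, h.infinitesimal]⟩

theorem IsCenteredResolvent.evalSubst {φ φ' : A →ₗ[R] R} {v g : R⟦X⟧} {x : R[X]⟦X⟧}
    (h : IsCenteredResolvent (law φ a) (law φ' a) Polynomial.X v g x) :
    IsCenteredResolvent φ φ' a (v.subst w) (g.subst w) (evalSubst a hw x) := by
  have hsubst : HasSubst w := HasSubst.of_constantCoeff_zero' hw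
  have hmul : coeffwise φ (TypeBPrime.evalSubst a hw x * TypeBPrime.evalSubst a hw x) =
      (coeffwise (law φ a) (x * x)).subst w := by
    rw [← map_mul, coeffwise_evalSubst]
  refine ⟨?_, ?_, ?_, ?_⟩
  · simpa only [map_mul, map_sub, map_one, evalSubst_smul, evalSubst_C_X] using
      congrArg (TypeBPrime.evalSubst a hw) h.mul_one_sub
  · rw [coeffwise_evalSubst, h.centered, ← coe_substAlgHom hsubst, map_zero]
  · rw [hmul, derivative_subst hsubst, derivative_subst hsubst, h.derivative, subst_mul hsubst,
      mul_assoc]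
  · rw [hmul, coeffwise_evalSubst, h.infinitesimal, ← subst_mul hsubst, ← coe_substAlgHom hsubst,
      map_neg]

theorem IsMarkovKrein.exists_isCenteredResolvent {φ φ' : A →ₗ[R] R} {f : R⟦X⟧}
    (h : IsMarkovKrein φ φ' a f) (hw : constantCoeff w = 0) :
    ∃ x : A⟦X⟧, (∀ n, coeff n x ∈ Algebra.adjoin R {a}) ∧
      IsCenteredResolvent φ φ' a w (f.subst w) x := by
  have hx := h.polynomial_X.isCenteredResolvent.evalSubst hw
  rw [subst_X (HasSubst.of_constantCoeff_zero' hw)] at hx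
  exact ⟨_, fun n => coeff_evalSubst_mem hw n _, hx⟩

end Substitution

section Subordination

theorem exists_fixedPoint_of_adic_contraction {S : Type*} [CommRing S] (I : Ideal S)
    [IsAdicComplete I S] {F : S → S}
    (hF : ∀ k u v, u - v ∈ I ^ k → F u - F v ∈ I ^ (k + 1)) : ∃ u, F u = u := by
  have hmod (n : ℕ) (u v : S) : u ≡ v [SMOD (I ^ n • ⊤ : Submodule S S)] ↔ u - v ∈ I ^ n := by
    rw [SModEq.sub_mem, smul_eq_mul, Ideal.mul_top]
  have hstep (n : ℕ) : F^[n] 0 - F^[n + 1] 0 ∈ I ^ n := by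
    induction n with
    | zero => simp
    | succ n ih =>
      rw [Function.iterate_succ_apply', Function.iterate_succ_apply' F (n + 1)]
      exact hF n _ _ ih
  have hcauchy {m n : ℕ} (hmn : m ≤ n) : F^[m] 0 - F^[n] 0 ∈ I ^ m := by
    induction n, hmn using Nat.le_induction with
    | base => simp
    | succ n hmn ih =>
      rw [← sub_add_sub_cancel _ (F^[n] 0)]
      exact add_mem ih (Ideal.pow_le_pow_right hmn (hstep n))
  obtain ⟨u, hu⟩ := IsPrecomplete.prec' (fun n => F^[n] 0) fun {m n} hmn =>
    (hmod m _ _).2 (hcauchy hmn)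
  have hlim (n : ℕ) : F^[n] 0 - u ∈ I ^ n := (hmod n _ _).1 (hu n)
  refine ⟨u, IsHausdorff.eq_iff_smodEq (I := I).2 fun n => (hmod n _ _).2 ?_⟩
  rw [← sub_add_sub_cancel _ (F^[n + 1] 0), Function.iterate_succ_apply', ← neg_sub (F _) (F u)]
  refine Ideal.pow_le_pow_right n.le_succ (add_mem (neg_mem (hF n _ _ (hlim n))) ?_)
  rw [← Function.iterate_succ_apply' F]
  exact hlim (n + 1)

variable {R : Type*} [CommRing R]

theorem X_pow_dvd_subst_sub_subst (f : R⟦X⟧) {u v : R⟦X⟧} (hu : constantCoeff u = 0)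
    (hv : constantCoeff v = 0) {k : ℕ} (h : X ^ k ∣ u - v) :
    X ^ k ∣ f.subst u - f.subst v := by
  rw [X_pow_dvd_iff] at h ⊢
  intro n hn
  rw [map_sub, sub_eq_zero, coeff_subst' (HasSubst.of_constantCoeff_zero' hu),
    coeff_subst' (HasSubst.of_constantCoeff_zero' hv)]
  refine finsum_congr fun d => congrArg _ (sub_eq_zero.1 ?_)
  rw [← map_sub]
  exact X_pow_dvd_iff.1 ((X_pow_dvd_iff.2 h).trans (sub_dvd_pow_sub_pow u v d)) n hn

theorem constantCoeff_X_mul (u : R⟦X⟧) : constantCoeff (X * u) = 0 := by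
  rw [map_mul, constantCoeff_X, zero_mul]

theorem exists_subordination (f₁ f₂ : R⟦X⟧) :
    ∃ g₁ g₂ : R⟦X⟧, f₁.subst (X * g₂) = g₁ ∧ f₂.subst (X * g₁) = g₂ := by
  have hsubst (f : R⟦X⟧) {k : ℕ} {u v : R⟦X⟧} (h : X ^ k ∣ u - v) :
      X ^ (k + 1) ∣ f.subst (X * u) - f.subst (X * v) := by
    refine X_pow_dvd_subst_sub_subst f (constantCoeff_X_mul u) (constantCoeff_X_mul v) ?_
    rw [pow_succ', ← mul_sub]
    exact mul_dvd_mul_left X h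
  obtain ⟨g₁, hg₁⟩ := exists_fixedPoint_of_adic_contraction (Ideal.span {(X : R⟦X⟧)})
    (F := fun u => f₁.subst (X * f₂.subst (X * u))) fun k u v h => by
      rw [Ideal.span_singleton_pow, Ideal.mem_span_singleton] at h ⊢
      exact (pow_dvd_pow X (k + 1).le_succ).trans (hsubst f₁ (hsubst f₂ h))
  exact ⟨g₁, f₂.subst (X * g₁), hg₁, rfl⟩

end Subordination

section AlternatingWords

section Wrap

variable {α : Type*} {n : ℕ} (c : α) (w : Fin n → α) (d : α)

/-- The word `w` with `c` prepended and `d` appended. -/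
def wrap : Fin (n + 2) → α := Fin.cons c (Fin.snoc w d : Fin (n + 1) → α)

theorem wrap_succ_castSucc (p : Fin n) : wrap c w d p.castSucc.succ = w p := by
  rw [wrap, Fin.cons_succ, Fin.snoc_castSucc]

theorem wrap_zero : wrap c w d 0 = c := rfl

theorem wrap_last : wrap c w d (Fin.last (n + 1)) = d := by
  rw [wrap, ← Fin.succ_last, Fin.cons_succ, Fin.snoc_last]

theorem wrap_rev_succ_castSucc (p : Fin n) :
    wrap c w d p.castSucc.succ.rev = w p.rev := by
  rw [Fin.rev_succ, Fin.rev_castSucc, ← Fin.succ_castSucc, wrap_succ_castSucc]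

theorem palindromic_wrap_iff :
    (∀ p, wrap c w c p = wrap c w c p.rev) ↔ ∀ p, w p = w p.rev := by
  rw [Fin.forall_fin_succ, Fin.forall_fin_succ', Fin.succ_last, Fin.rev_zero, Fin.rev_last]
  simp only [wrap_succ_castSucc, wrap_rev_succ_castSucc, wrap_last, wrap_zero, true_and,
    and_true]

theorem prod_ofFn_snoc {M : Type*} [Monoid M] {n : ℕ} (w : Fin n → M) (d : M) :
    (List.ofFn (Fin.snoc w d : Fin (n + 1) → M)).prod = (List.ofFn w).prod * d := by
  rw [List.ofFn_succ', List.prod_concat, Fin.snoc_last]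
  simp only [Fin.snoc_castSucc]

theorem prod_ofFn_wrap {M : Type*} [Monoid M] {n : ℕ} (c : M) (w : Fin n → M) (d : M) :
    (List.ofFn (wrap c w d)).prod = c * (List.ofFn w).prod * d := by
  rw [wrap, List.ofFn_cons, List.prod_cons, prod_ofFn_snoc, mul_assoc]

end Wrap

variable {ι L : Type*}

/-- `w` is an alternating word of centered letters, the `k`-th of which lies in `Alg (idx k)`. -/
structure IsAltWord (φ : L → ℂ) (Alg : ι → Set L) {n : ℕ} (idx : Fin (n + 1) → ι)
    (w : Fin (n + 1) → L) : Prop where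
  alternating : ∀ k : Fin n, idx k.castSucc ≠ idx k.succ
  mem : ∀ k, w k ∈ Alg (idx k)
  centered : ∀ k, φ (w k) = 0

namespace IsAltWord

variable {φ : L → ℂ} {Alg : ι → Set L} {n : ℕ} {idx : Fin (n + 1) → ι} {w : Fin (n + 1) → L}
  {k : ι} {c d : L}

theorem singleton (hc : c ∈ Alg k) (hc0 : φ c = 0) :
    IsAltWord φ Alg (fun _ : Fin 1 => k) (fun _ => c) :=
  ⟨fun p => p.elim0, fun _ => hc, fun _ => hc0⟩

theorem cons (h : IsAltWord φ Alg idx w) (hk : k ≠ idx 0) (hc : c ∈ Alg k) (hc0 : φ c = 0) :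
    IsAltWord φ Alg (Fin.cons k idx : Fin (n + 2) → ι) (Fin.cons c w : Fin (n + 2) → L) where
  alternating p := by
    cases p using Fin.cases with
    | zero => simpa using hk
    | succ p => simpa only [← Fin.succ_castSucc, Fin.cons_succ] using h.alternating p
  mem p := by
    cases p using Fin.cases with
    | zero => exact hc
    | succ p => exact h.mem p
  centered p := by
    cases p using Fin.cases with
    | zero => exact hc0
    | succ p => exact h.centered p

theorem snoc (h : IsAltWord φ Alg idx w) (hk : k ≠ idx (Fin.last n)) (hd : d ∈ Alg k)
    (hd0 : φ d = 0) :
    IsAltWord φ Alg (Fin.snoc idx k : Fin (n + 2) → ι) (Fin.snoc w d : Fin (n + 2) → L) where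
  alternating p := by
    cases p using Fin.lastCases with
    | last => simpa using hk.symm
    | cast p => simpa only [Fin.succ_castSucc, Fin.snoc_castSucc] using h.alternating p
  mem p := by
    cases p using Fin.lastCases with
    | last => simpa using hd
    | cast p => simpa using h.mem p
  centered p := by
    cases p using Fin.lastCases with
    | last => simpa using hd0
    | cast p => simpa using h.centered p

theorem wrap (h : IsAltWord φ Alg idx w) (hk : k ≠ idx 0) (hk' : k ≠ idx (Fin.last n))
    (hc : c ∈ Alg k) (hc0 : φ c = 0) (hd : d ∈ Alg k) (hd0 : φ d = 0) :
    IsAltWord φ Alg (wrap k idx k) (wrap c w d) :=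
  (h.snoc hk' hd hd0).cons (by simpa using hk) hc hc0

end IsAltWord

theorem IsInfFree.infinitesimal_wrap {A : Type*} [Ring A] {φ φ' : A → ℂ} {Alg : ι → Set A}
    (hfree : IsInfFree φ φ' Alg) {n : ℕ} {idx : Fin (n + 1) → ι} {w : Fin (n + 1) → A} {k : ι}
    {c d : A} (h : IsAltWord φ Alg idx w) (hk : k ≠ idx 0) (hk' : k ≠ idx (Fin.last n))
    (hc : c ∈ Alg k) (hc0 : φ c = 0) (hd : d ∈ Alg k) (hd0 : φ d = 0) :
    φ' (c * (List.ofFn w).prod * d) = φ (c * d) * φ' (List.ofFn w).prod := by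
  obtain ⟨-, hvanish, hpal⟩ := hfree
  have hwrap := h.wrap hk hk' hc hc0 hd hd0
  rw [← prod_ofFn_wrap]
  by_cases hidx : Even n ∧ ∀ p, idx p = idx p.rev
  · obtain ⟨⟨m, hm⟩, hidx⟩ := hidx
    obtain rfl : n = 2 * m := by rw [hm, two_mul]
    rw [hpal m idx w h.alternating h.mem h.centered hidx,
      hpal (m + 1) _ _ hwrap.alternating hwrap.mem hwrap.centered
        ((palindromic_wrap_iff k idx).2 hidx), Fin.prod_univ_succ, mul_assoc]
    refine congrArg₂ (· * ·) ?_ (congrArg₂ (· * ·) (Finset.prod_congr rfl fun p _ => ?_) ?_)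
    · exact congrArg (fun e => φ (c * e)) (wrap_last c w d)
    · exact congrArg₂ (fun e e' => φ (e * e')) (wrap_succ_castSucc c w d (p.castLE (by omega)))
        (wrap_rev_succ_castSucc c w d (p.castLE (by omega)))
    · exact congrArg φ' (wrap_succ_castSucc c w d ⟨m, by omega⟩)
  · rw [hvanish _ _ _ h.alternating h.mem h.centered hidx, mul_zero]
    refine hvanish _ _ _ hwrap.alternating hwrap.mem hwrap.centered ?_
    rwa [palindromic_wrap_iff, Nat.even_add, iff_true_right even_two]

section AltSpan

variable {A : Type*} [Ring A] [Algebra ℂ A]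

/-- The span of the alternating words of centered letters whose first letter lies in `Alg i` and
whose last letter lies in `Alg j`. -/
def altSpan (φ : A → ℂ) (Alg : ι → Set A) (i j : ι) : Submodule ℂ A :=
  Submodule.span ℂ {p | ∃ (n : ℕ) (idx : Fin (n + 1) → ι) (w : Fin (n + 1) → A),
    IsAltWord φ Alg idx w ∧ idx 0 = i ∧ idx (Fin.last n) = j ∧ (List.ofFn w).prod = p}

section Membership

variable {φ : A → ℂ} {Alg : ι → Set A} {i j k : ι} {c p : A}

theorem mem_altSpan_of_centered (hc : c ∈ Alg i) (hc0 : φ c = 0) : c ∈ altSpan φ Alg i i :=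
  Submodule.subset_span ⟨0, _, _, .singleton hc hc0, rfl, rfl, by simp⟩

theorem mul_mem_altSpan_left (hk : k ≠ i) (hc : c ∈ Alg k) (hc0 : φ c = 0)
    (hp : p ∈ altSpan φ Alg i j) : c * p ∈ altSpan φ Alg k j := by
  suffices altSpan φ Alg i j ≤ (altSpan φ Alg k j).comap (LinearMap.mulLeft ℂ c) from this hp
  refine Submodule.span_le.2 ?_
  rintro _ ⟨n, idx, w, hw, rfl, rfl, rfl⟩
  refine Submodule.subset_span ⟨n + 1, _, _, hw.cons hk hc hc0, Fin.cons_zero _ _, ?_, ?_⟩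
  · rw [← Fin.succ_last, Fin.cons_succ]
  · rw [List.ofFn_cons, List.prod_cons, LinearMap.mulLeft_apply]

end Membership

namespace IsInfFree

variable {φ φ' : A →ₗ[ℂ] ℂ} {Alg : ι → Set A} {i j k : ι} {c d p : A}

theorem map_eq_zero (hfree : IsInfFree φ φ' Alg) (hp : p ∈ altSpan φ Alg i j) : φ p = 0 := by
  refine (Submodule.span_le (p := LinearMap.ker φ)).2 ?_ hp
  rintro _ ⟨n, idx, w, hw, -, -, rfl⟩
  exact hfree.1 n idx w hw.alternating hw.mem hw.centered

theorem infinitesimal_eq_zero (hfree : IsInfFree φ φ' Alg) (hij : i ≠ j)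
    (hp : p ∈ altSpan φ Alg i j) : φ' p = 0 := by
  refine (Submodule.span_le (p := LinearMap.ker φ')).2 ?_ hp
  rintro _ ⟨n, idx, w, hw, rfl, rfl, rfl⟩
  refine hfree.2.1 n idx w hw.alternating hw.mem hw.centered fun h => hij ?_
  rw [h.2 0, Fin.rev_zero]

theorem infinitesimal_mul_mul (hfree : IsInfFree φ φ' Alg) (hki : k ≠ i) (hkj : k ≠ j)
    (hc : c ∈ Alg k) (hc0 : φ c = 0) (hd : d ∈ Alg k) (hd0 : φ d = 0)
    (hp : p ∈ altSpan φ Alg i j) : φ' (c * p * d) = φ (c * d) * φ' p := by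
  refine LinearMap.eqOn_span (f := φ' ∘ₗ LinearMap.mulRight ℂ d ∘ₗ LinearMap.mulLeft ℂ c)
    (g := φ (c * d) • φ') ?_ hp
  rintro _ ⟨n, idx, w, hw, rfl, rfl, rfl⟩
  exact hfree.infinitesimal_wrap hw hki hkj hc hc0 hd hd0

end IsInfFree

end AltSpan

end AlternatingWords

section SeriesInSubmodule

variable {R A : Type*} [CommRing R] [Ring A] [Algebra R A]

/-- The series all of whose coefficients lie in the submodule `S`. -/
noncomputable def seriesIn (S : Submodule R A) : Submodule R⟦X⟧ A⟦X⟧ where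
  carrier := {u | ∀ n, coeff n u ∈ S}
  add_mem' hu hv n := by simpa only [map_add] using S.add_mem (hu n) (hv n)
  zero_mem' n := by simp only [map_zero, zero_mem]
  smul_mem' f u hu n := by
    rw [coeff_series_smul]
    exact S.sum_mem fun p _ => S.smul_mem _ (hu p.2)

theorem mul_mem_seriesIn {S : Submodule R A} {u v : A⟦X⟧}
    (h : ∀ m n, coeff m u * coeff n v ∈ S) : u * v ∈ seriesIn S := fun n => by
  rw [coeff_mul]
  exact S.sum_mem fun p _ => h p.1 p.2

theorem mem_seriesIn_of_eq_add_X_smul_mul {S : Submodule R A} {r u v : A⟦X⟧}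
    (hr : ∀ s ∈ S, r * C s ∈ seriesIn S) (hv : v ∈ seriesIn S)
    (hu : u = v + (X : R⟦X⟧) • (r * u)) : u ∈ seriesIn S := fun n => by
  induction n using Nat.strong_induction_on with
  | _ n ih =>
    rw [hu, map_add, X_smul]
    refine S.add_mem (hv n) ?_
    cases n with
    | zero => simp only [coeff_zero_X_mul, zero_mem]
    | succ n =>
      rw [coeff_succ_X_mul, coeff_mul]
      refine S.sum_mem fun p hp => ?_
      have hp2 : coeff p.2 u ∈ S := ih p.2 (by have := mem_antidiagonal.mp hp; omega)
      simpa only [coeff_mul_C] using hr _ hp2 p.1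

theorem coeffwise_eq_zero {S : Submodule R A} {ψ : A →ₗ[R] R} {u : A⟦X⟧} (hu : u ∈ seriesIn S)
    (hψ : ∀ s ∈ S, ψ s = 0) : coeffwise ψ u = 0 := by
  ext n
  rw [coeff_coeffwise, hψ _ (hu n), map_zero]

theorem coeffwise_mul_mul {ψ ψ' : A →ₗ[R] R} {u v w : A⟦X⟧}
    (h : ∀ k l m, ψ' (coeff k u * coeff l w * coeff m v) =
      ψ (coeff k u * coeff m v) * ψ' (coeff l w)) :
    coeffwise ψ' (u * w * v) = coeffwise ψ (u * v) * coeffwise ψ' w := by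
  ext n
  simp only [coeff_coeffwise, coeff_mul, map_sum, Finset.sum_mul, h]
  rw [Finset.sum_sigma', Finset.sum_sigma']
  refine Finset.sum_nbij' (fun q => ⟨(q.2.1 + q.1.2, q.2.2), (q.2.1, q.1.2)⟩)
    (fun q => ⟨(q.2.1 + q.1.2, q.2.2), (q.2.1, q.1.2)⟩) ?_ ?_ ?_ ?_ fun _ _ => rfl <;>
  · rintro ⟨⟨i, j⟩, k, l⟩ hq
    simp only [Finset.mem_sigma, mem_antidiagonal] at hq ⊢
    grind

end SeriesInSubmodule

section AlternatingSeries

section Geometric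

variable {R A : Type*} [CommRing R] [Ring A] [Algebra R A]

/-- The geometric series `∑ Xⁿ uⁿ`, the inverse of `1 - X u`. -/
noncomputable def geometric (u : A⟦X⟧) : A⟦X⟧ := invOfUnit (1 - X * u) 1

variable (R) in
theorem geometric_mul_one_sub (u : A⟦X⟧) : geometric u * (1 - (X : R⟦X⟧) • u) = 1 := by
  rw [X_smul]
  exact invOfUnit_mul _ 1 (by simp)

variable (R) in
theorem geometric_eq_one_add_mul (u : A⟦X⟧) :
    geometric u = 1 + (X : R⟦X⟧) • (u * geometric u) := by
  have h : (1 - X * u) * geometric u = 1 := mul_invOfUnit _ 1 (by simp)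
  rw [X_smul, ← mul_assoc, ← h, sub_mul, one_mul, sub_add_cancel]

variable (R) in
theorem geometric_eq_one_add_geometric_mul (u : A⟦X⟧) :
    geometric u = 1 + (X : R⟦X⟧) • (geometric u * u) := by
  rw [← geometric_mul_one_sub R u, mul_sub, mul_one, mul_smul_comm, sub_add_cancel]

end Geometric

variable {A ι : Type*} [Ring A] [Algebra ℂ A] {φ φ' : A →ₗ[ℂ] ℂ} {Alg : ι → Set A} {i j k : ι}
  {u v x y : A⟦X⟧}

/-- `x` is a series of letters from `S`, each of them centered for `φ`. -/
structure IsCenteredSeries (φ : A →ₗ[ℂ] ℂ) (S : Set A) (x : A⟦X⟧) : Prop where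
  mem : ∀ n, coeff n x ∈ S
  centered : coeffwise φ x = 0

namespace IsCenteredSeries

theorem map_coeff {S : Set A} (hx : IsCenteredSeries φ S x) (n : ℕ) : φ (coeff n x) = 0 := by
  rw [← coeff_coeffwise, hx.centered, map_zero]

theorem mem_seriesIn (hx : IsCenteredSeries φ (Alg k) x) : x ∈ seriesIn (altSpan φ Alg k k) :=
  fun n => mem_altSpan_of_centered (hx.mem n) (hx.map_coeff n)

theorem mul_mem_seriesIn (hx : IsCenteredSeries φ (Alg k) x) (hk : k ≠ i)
    (hu : u ∈ seriesIn (altSpan φ Alg i j)) : x * u ∈ seriesIn (altSpan φ Alg k j) :=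
  TypeBPrime.mul_mem_seriesIn fun m n =>
    mul_mem_altSpan_left hk (hx.mem m) (hx.map_coeff m) (hu n)

theorem mul_C_mem_seriesIn {s : A} (hx : IsCenteredSeries φ (Alg k) x) (hk : k ≠ i)
    (hs : s ∈ altSpan φ Alg i j) : x * C s ∈ seriesIn (altSpan φ Alg k j) := fun n => by
  rw [coeff_mul_C]
  exact mul_mem_altSpan_left hk (hx.mem n) (hx.map_coeff n) hs

theorem mul_geometric_mem_seriesIn (hx : IsCenteredSeries φ (Alg i) x)
    (hy : IsCenteredSeries φ (Alg j) y) (hij : i ≠ j) :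
    y * geometric (x * y) ∈ seriesIn (altSpan φ Alg j j) := by
  refine mem_seriesIn_of_eq_add_X_smul_mul (r := y * x) (v := y) (fun s hs => ?_) hy.mem_seriesIn ?_
  · rw [mul_assoc]
    exact hy.mul_mem_seriesIn hij.symm (hx.mul_C_mem_seriesIn hij hs)
  · conv_lhs => rw [geometric_eq_one_add_mul ℂ, mul_add, mul_one, mul_smul_comm]
    simp only [mul_assoc]

theorem geometric_mul_mem_seriesIn (hx : IsCenteredSeries φ (Alg i) x)
    (hy : IsCenteredSeries φ (Alg j) y) (hij : i ≠ j) :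
    geometric (x * y) * x ∈ seriesIn (altSpan φ Alg i i) := by
  refine mem_seriesIn_of_eq_add_X_smul_mul (r := x * y) (v := x) (fun s hs => ?_) hx.mem_seriesIn ?_
  · rw [mul_assoc]
    exact hx.mul_mem_seriesIn hij (hy.mul_C_mem_seriesIn hij.symm hs)
  · conv_lhs => rw [geometric_eq_one_add_mul ℂ, add_mul, one_mul, smul_mul_assoc, mul_assoc]

end IsCenteredSeries

namespace IsInfFree

theorem coeffwise_eq_zero (hfree : IsInfFree φ φ' Alg) (hu : u ∈ seriesIn (altSpan φ Alg i j)) :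
    coeffwise φ u = 0 :=
  TypeBPrime.coeffwise_eq_zero hu fun _ => hfree.map_eq_zero

theorem coeffwise_infinitesimal_eq_zero (hfree : IsInfFree φ φ' Alg) (hij : i ≠ j)
    (hu : u ∈ seriesIn (altSpan φ Alg i j)) : coeffwise φ' u = 0 :=
  TypeBPrime.coeffwise_eq_zero hu fun _ => hfree.infinitesimal_eq_zero hij

theorem coeffwise_infinitesimal_mul_mul (hfree : IsInfFree φ φ' Alg) (hki : k ≠ i)
    (hx : IsCenteredSeries φ (Alg k) x) (hu : u ∈ seriesIn (altSpan φ Alg i i)) :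
    coeffwise φ' (x * u * x) = coeffwise φ (x * x) * coeffwise φ' u :=
  coeffwise_mul_mul fun k l m => hfree.infinitesimal_mul_mul hki hki (hx.mem k) (hx.map_coeff k)
    (hx.mem m) (hx.map_coeff m) (hu l)

variable (hfree : IsInfFree φ φ' Alg) (hij : i ≠ j)
  (hx : IsCenteredSeries φ (Alg i) x) (hy : IsCenteredSeries φ (Alg j) y)
include hfree hij hx hy

theorem coeffwise_geometric : coeffwise φ (geometric (x * y)) = coeffwise φ 1 := by
  have hmem := hx.mul_mem_seriesIn hij (hx.mul_geometric_mem_seriesIn hy hij)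
  rw [geometric_eq_one_add_mul ℂ, map_add, map_smul, mul_assoc, hfree.coeffwise_eq_zero hmem,
    smul_zero, add_zero]

theorem coeffwise_infinitesimal_geometric :
    coeffwise φ' (geometric (x * y)) = coeffwise φ' 1 := by
  have hmem := hx.mul_mem_seriesIn hij (hx.mul_geometric_mem_seriesIn hy hij)
  rw [geometric_eq_one_add_mul ℂ, map_add, map_smul, mul_assoc,
    hfree.coeffwise_infinitesimal_eq_zero hij hmem, smul_zero, add_zero]

theorem coeffwise_infinitesimal_mul_geometric :
    coeffwise φ' (y * geometric (x * y)) = coeffwise φ' y +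
      X * (coeffwise φ (y * y) * coeffwise φ' (geometric (x * y) * x)) := by
  have hmem := hx.geometric_mul_mem_seriesIn hy hij
  have hexpand : y * geometric (x * y) =
      y + (X : ℂ⟦X⟧) • (y * (geometric (x * y) * x) * y) := by
    conv_lhs => rw [geometric_eq_one_add_geometric_mul ℂ]
    simp only [mul_add, mul_one, mul_smul_comm, mul_assoc]
  rw [hexpand, map_add, map_smul, hfree.coeffwise_infinitesimal_mul_mul hij.symm hy hmem,
    smul_eq_mul]

theorem coeffwise_infinitesimal_geometric_mul :
    coeffwise φ' (geometric (x * y) * x) = coeffwise φ' x +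
      X * (coeffwise φ (x * x) * coeffwise φ' (y * geometric (x * y))) := by
  have hmem := hx.mul_geometric_mem_seriesIn hy hij
  have hexpand : geometric (x * y) * x =
      x + (X : ℂ⟦X⟧) • (x * (y * geometric (x * y)) * x) := by
    conv_lhs => rw [geometric_eq_one_add_mul ℂ]
    simp only [add_mul, one_mul, smul_mul_assoc, mul_assoc]
  rw [hexpand, map_add, map_smul, hfree.coeffwise_infinitesimal_mul_mul hij hx hmem, smul_eq_mul]

end IsInfFree

end AlternatingSeries

section Product

theorem mul_mul_eq_smul_of_resolvents {R S : Type*} [CommRing R] [Ring S] [Algebra R S]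
    {z g₁ g₂ : R} {a b x y K P : S} (hx : x * (1 - (z * g₂) • a) = a - g₁ • (1 : S))
    (hy : y * (1 - (z * g₁) • b) = b - g₂ • (1 : S)) (hK : K * (1 - z • (x * y)) = 1)
    (hP : (1 - z • (a * b)) * P = 1) :
    (1 + (z * g₁) • y) * K * (1 + (z * g₂) • x) = (1 - z * (g₁ * g₂)) • P := by
  have hxa : (z * g₂) • (x * a) = x - a + g₁ • (1 : S) := by
    rw [mul_sub, mul_one, mul_smul_comm] at hx
    rw [sub_add, ← hx, sub_sub_cancel]
  have hfactor : (1 - z • (x * y)) * (1 - (z * g₁) • b) =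
      (1 + (z * g₂) • x) * (1 - z • (a * b)) := by
    have hxab : (1 + (z * g₂) • x) * (1 - z • (a * b)) =
        1 + (z * g₂) • x - z • ((a + (z * g₂) • (x * a)) * b) := by
      simp only [add_mul, mul_sub, one_mul, mul_one, smul_mul_assoc, mul_smul_comm, mul_assoc]
    rw [sub_mul, one_mul, smul_mul_assoc, mul_assoc, hy, hxab, hxa]
    simp only [add_mul, sub_mul, mul_sub, mul_one, one_mul, smul_mul_assoc, mul_smul_comm]
    module
  have hscalar : (1 + (z * g₁) • y) * (1 - (z * g₁) • b) = (1 - z * (g₁ * g₂)) • (1 : S) := by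
    rw [add_mul, one_mul, smul_mul_assoc, hy]
    module
  calc (1 + (z * g₁) • y) * K * (1 + (z * g₂) • x)
      = (1 + (z * g₁) • y) * K * ((1 + (z * g₂) • x) * (1 - z • (a * b))) * P := by
        rw [mul_assoc, mul_assoc _ _ P, mul_assoc _ _ P, hP, mul_one, mul_assoc]
    _ = (1 + (z * g₁) • y) * (K * (1 - z • (x * y))) * (1 - (z * g₁) • b) * P := by
        rw [← hfactor]; simp only [mul_assoc]
    _ = (1 - z * (g₁ * g₂)) • P := by
        rw [hK, mul_one, hscalar, smul_mul_assoc, one_mul]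

theorem eq_of_mul_X_system {R : Type*} [CommRing R] {p q α β u v u' v' : R⟦X⟧}
    (hu : u = α + X * (q * v)) (hv : v = β + X * (p * u)) (hu' : u' = α + X * (q * v'))
    (hv' : v' = β + X * (p * u')) : u = u' ∧ v = v' := by
  have hunit : IsUnit (1 - X * (X * (p * q))) := by
    rw [isUnit_iff_constantCoeff]; simp
  have huu : u = u' := by
    refine hunit.mul_left_cancel ?_
    linear_combination hu - hu' + X * q * (hv - hv')
  exact ⟨huu, by rw [hv, hv', huu]⟩

theorem one_sub_smul_powers_mul {R A : Type*} [CommRing R] [Ring A] [Algebra R A] {a b : A}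
    {x y : A⟦X⟧} {g₁ g₂ : R⟦X⟧} (hx : x * (1 - (X * g₂) • C a) = C a - g₁ • (1 : A⟦X⟧))
    (hy : y * (1 - (X * g₁) • C b) = C b - g₂ • (1 : A⟦X⟧)) :
    (1 - X * (g₁ * g₂)) • powers (a * b) =
      geometric (x * y) + (X * g₁) • (y * geometric (x * y)) +
      (X * g₂) • (geometric (x * y) * x + (X * g₁) • (y * (geometric (x * y) * x))) := by
  have hpowers : (1 - (X : R⟦X⟧) • (C a * C b)) * powers (a * b) = 1 := by
    rw [← map_mul, one_sub_mul_powers]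
  rw [← mul_mul_eq_smul_of_resolvents hx hy (geometric_mul_one_sub R _) hpowers]
  simp only [add_mul, mul_add, one_mul, mul_one, smul_mul_assoc, mul_smul_comm, mul_assoc]

namespace IsInfFree

variable {A ι : Type*} [Ring A] [Algebra ℂ A] {φ φ' : A →ₗ[ℂ] ℂ} {Alg : ι → Set A} {i j : ι}
  {a b : A}

section Resolvents

variable {x y : A⟦X⟧} {g₁ g₂ : ℂ⟦X⟧}

theorem coeffwise_infinitesimal_resolvents (hfree : IsInfFree φ φ' Alg) (hij : i ≠ j)
    (hxA : ∀ n, coeff n x ∈ Alg i) (hx : IsCenteredResolvent φ φ' a (X * g₂) g₁ x)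
    (hyA : ∀ n, coeff n y ∈ Alg j) (hy : IsCenteredResolvent φ φ' b (X * g₁) g₂ y) :
    coeffwise φ' (y * geometric (x * y)) = -(X * d⁄dX ℂ g₂) ∧
      coeffwise φ' (geometric (x * y) * x) = -(X * d⁄dX ℂ g₁) := by
  have hX (g : ℂ⟦X⟧) : d⁄dX ℂ (X * g) = X * d⁄dX ℂ g + g := by
    rw [Derivation.leibniz, derivative_X, smul_eq_mul, smul_eq_mul, mul_one]
  have hxs : IsCenteredSeries φ (Alg i) x := ⟨hxA, hx.centered⟩
  have hys : IsCenteredSeries φ (Alg j) y := ⟨hyA, hy.centered⟩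
  refine eq_of_mul_X_system (hfree.coeffwise_infinitesimal_mul_geometric hij hxs hys)
    (hfree.coeffwise_infinitesimal_geometric_mul hij hxs hys) ?_ ?_
  · rw [hy.infinitesimal, hy.derivative, hX]
    ring
  · rw [hx.infinitesimal, hx.derivative, hX]
    ring

theorem isMarkovKrein_mul_of_resolvents (hfree : IsInfFree φ φ' Alg) (hij : i ≠ j)
    (hone : coeffwise φ (1 : A⟦X⟧) = 1) (hone' : coeffwise φ' (1 : A⟦X⟧) = 0)
    (hxA : ∀ n, coeff n x ∈ Alg i) (hx : IsCenteredResolvent φ φ' a (X * g₂) g₁ x)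
    (hyA : ∀ n, coeff n y ∈ Alg j) (hy : IsCenteredResolvent φ φ' b (X * g₁) g₂ y) :
    IsMarkovKrein φ φ' (a * b) (g₁ * g₂) := by
  have hxs : IsCenteredSeries φ (Alg i) x := ⟨hxA, hx.centered⟩
  have hys : IsCenteredSeries φ (Alg j) y := ⟨hyA, hy.centered⟩
  have hyK := hxs.mul_geometric_mem_seriesIn hys hij
  have hKx := hxs.geometric_mul_mem_seriesIn hys hij
  have hyKx := hys.mul_mem_seriesIn hij.symm hKx
  have hpowers := one_sub_smul_powers_mul hx.mul_one_sub hy.mul_one_sub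
  obtain ⟨hyK', hKx'⟩ := hfree.coeffwise_infinitesimal_resolvents hij hxA hx hyA hy
  constructor
  · rw [← smul_eq_mul, ← map_smul, hpowers]
    simp only [map_add, map_smul, hfree.coeffwise_eq_zero hyK, hfree.coeffwise_eq_zero hKx,
      hfree.coeffwise_eq_zero hyKx, hfree.coeffwise_geometric hij hxs hys, hone, smul_zero,
      add_zero]
  · rw [← smul_eq_mul, ← map_smul, hpowers]
    simp only [map_add, map_smul, hyK', hKx', hfree.coeffwise_infinitesimal_eq_zero hij.symm hyKx,
      hfree.coeffwise_infinitesimal_geometric hij hxs hys, hone', zero_add, smul_eq_mul,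
      Derivation.leibniz]
    ring

end Resolvents

theorem exists_isMarkovKrein_mul {f₁ f₂ : ℂ⟦X⟧} (hfree : IsInfFree φ φ' Alg) (hij : i ≠ j)
    (ha : (Algebra.adjoin ℂ {a} : Set A) ⊆ Alg i) (hb : (Algebra.adjoin ℂ {b} : Set A) ⊆ Alg j)
    (h₁ : IsMarkovKrein φ φ' a f₁) (h₂ : IsMarkovKrein φ φ' b f₂) :
    ∃ f, IsMarkovKrein φ φ' (a * b) f := by
  obtain ⟨g₁, g₂, hg₁, hg₂⟩ := exists_subordination f₁ f₂
  obtain ⟨x, hxA, hx⟩ := h₁.exists_isCenteredResolvent (constantCoeff_X_mul g₂)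
  obtain ⟨y, hyA, hy⟩ := h₂.exists_isCenteredResolvent (constantCoeff_X_mul g₁)
  rw [hg₁] at hx
  rw [hg₂] at hy
  exact ⟨g₁ * g₂, hfree.isMarkovKrein_mul_of_resolvents hij h₁.coeffwise_one
    h₁.infinitesimal_coeffwise_one (fun n => ha (hxA n)) hx (fun n => hb (hyA n)) hy⟩

end IsInfFree

end Product

theorem statement16
    {B : Type*} [Ring B] [Algebra ℂ B]
    (φ φ' : B →ₗ[ℂ] ℂ) (hφ1 : φ 1 = 1) (hφ'1 : φ' 1 = 0)
    (b₁ b₂ : B)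
    (hinf : IsInfFree ⇑φ ⇑φ' (fun i : Bool =>
      if i then (Algebra.adjoin ℂ {b₁} : Set B)
      else (Algebra.adjoin ℂ {b₂} : Set B)))
    (t₁ t₂ t : ℕ → ℂ)
    (ht₁ : IsInvMK (fun n => φ (b₁ ^ n)) t₁)
    (ht₂ : IsInvMK (fun n => φ (b₂ ^ n)) t₂)
    (hb₁ : ∀ n : ℕ, 0 < n → φ' (b₁ ^ n) = φ (b₁ ^ n) - t₁ n)
    (hb₂ : ∀ n : ℕ, 0 < n → φ' (b₂ ^ n) = φ (b₂ ^ n) - t₂ n)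
    (ht : IsInvMK (fun n => φ ((b₁ * b₂) ^ n)) t) :
    ∀ n : ℕ, 0 < n → φ' ((b₁ * b₂) ^ n) = φ ((b₁ * b₂) ^ n) - t n := by
  intro n _
  obtain ⟨f₁, h₁⟩ := ht₁.exists_isMarkovKrein hφ1 hφ'1 hb₁
  obtain ⟨f₂, h₂⟩ := ht₂.exists_isMarkovKrein hφ1 hφ'1 hb₂
  obtain ⟨f, h⟩ := hinf.exists_isMarkovKrein_mul (i := true) (j := false) Bool.noConfusion
    subset_rfl subset_rfl h₁ h₂
  exact h.infinitesimal_pow ht n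

end TypeBPrime
end
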